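/- arXiv:2602.06361 — 5 statements merged into one kernel-verified Lean document; each statement's English description precedes it below -/
import Mathlib

section
/- Fix δ ∈ (0,1), a noise level σ² > 0, m ≥ 1 items, and Δ > 0, and let μ^a, μ^b ∈ [0,1]^m be utility profiles with OptEnvy ≤ −Δ. Let τ = ⌈32σ² log(4m/δ) · m²/Δ²⌉, and for each item i ∈ {1,…,m} and each agent ν ∈ {a,b} let μ̂^ν_i be the average of τ i.i.d. N(μ^ν_i, σ²) samples, with all 2m·τ samples mutually independent. For a set S ⊆ {1,…,m} write μ̂^ν_S = ∑_{i∈S} μ̂^ν_i. Then with probability at least 1 − δ, every allocation A = (A_a, A_b) maximizing min{μ̂^a_{A_a} − μ̂^a_{A_b}, μ̂^b_{A_b} − μ̂^b_{A_a}} over all allocations satisfies Envy(A) ≤ 0. -/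
open MeasureTheory ProbabilityTheory Real Filter
open scoped ENNReal NNReal Classical

noncomputable section

def envyAB {m : ℕ} (μa : Fin m → ℝ) (A : Finset (Fin m)) : ℝ :=
  ∑ i ∈ Aᶜ, μa i - ∑ i ∈ A, μa i

def envyBA {m : ℕ} (μb : Fin m → ℝ) (A : Finset (Fin m)) : ℝ :=
  ∑ i ∈ A, μb i - ∑ i ∈ Aᶜ, μb i

def envy {m : ℕ} (μa μb : Fin m → ℝ) (A : Finset (Fin m)) : ℝ :=
  max (envyAB μa A) (envyBA μb A)

def optEnvy {m : ℕ} (μa μb : Fin m → ℝ) : ℝ :=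
  ⨅ A : Finset (Fin m), envy μa μb A

/-- The joint law of all `2 m τ` independent noisy samples: for each item `i : Fin m`,
agent `ν : Bool` (`true` = agent a, `false` = agent b) and repetition `t : Fin τ`,
the sample `ω (i, ν, t)` is `N(μ^ν_i, v)`. -/
def obsMeasure (m τ : ℕ) (v : ℝ≥0) (μa μb : Fin m → ℝ) :
    Measure ((Fin m × Bool × Fin τ) → ℝ) :=
  Measure.pi fun p => gaussianReal (if p.2.1 then μa p.1 else μb p.1) v

/-- `μ̂^ν_S`: the sum over `i ∈ S` of the averaged estimates `μ̂^ν_i`. -/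
def estS {m τ : ℕ} (ω : (Fin m × Bool × Fin τ) → ℝ) (ν : Bool) (S : Finset (Fin m)) : ℝ :=
  ∑ i ∈ S, (∑ t, ω (i, ν, t)) / (τ : ℝ)

lemma det_dev {m : ℕ} (x y : Fin m → ℝ) (e : ℝ) (h : ∀ i, |x i - y i| ≤ e)
    (A : Finset (Fin m)) :
    |(∑ i ∈ A, x i - ∑ i ∈ Aᶜ, x i) - (∑ i ∈ A, y i - ∑ i ∈ Aᶜ, y i)| ≤ m * e := by
  have h1 : (∑ i ∈ A, x i - ∑ i ∈ Aᶜ, x i) - (∑ i ∈ A, y i - ∑ i ∈ Aᶜ, y i)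
      = ∑ i ∈ A, (x i - y i) - ∑ i ∈ Aᶜ, (x i - y i) := by
    rw [Finset.sum_sub_distrib, Finset.sum_sub_distrib]; ring
  rw [h1]
  calc _ ≤ |∑ i ∈ A, (x i - y i)| + |∑ i ∈ Aᶜ, (x i - y i)| := abs_sub _ _
    _ ≤ ∑ i ∈ A, |x i - y i| + ∑ i ∈ Aᶜ, |x i - y i| :=
        add_le_add (Finset.abs_sum_le_sum_abs _ _) (Finset.abs_sum_le_sum_abs _ _)
    _ = ∑ i, |x i - y i| := Finset.sum_add_sum_compl _ _
    _ ≤ ∑ _i : Fin m, e := Finset.sum_le_sum fun i _ => h i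
    _ = m * e := by simp

lemma gauss_subG (u : ℝ) (v : ℝ≥0) :
    HasSubgaussianMGF (fun x => x - u) v (gaussianReal u v) := by
  rw [← HasSubgaussianMGF.id_map_iff (by fun_prop), gaussianReal_map_sub_const, sub_self]
  refine ⟨fun t => integrable_exp_mul_gaussianReal t, fun t => ?_⟩
  rw [mgf_id_gaussianReal]
  simp

lemma sum_subG {m τ : ℕ} (v : ℝ≥0) (μa μb : Fin m → ℝ) (i : Fin m) (ν : Bool) :
    HasSubgaussianMGF (fun ω : (Fin m × Bool × Fin τ) → ℝ =>
      ∑ t, (ω (i, ν, t) - (if ν then μa i else μb i))) (∑ _t : Fin τ, v)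
      (obsMeasure m τ v μa μb) := by
  have hind : iIndepFun (fun (p : Fin m × Bool × Fin τ) (ω : (Fin m × Bool × Fin τ) → ℝ) =>
      ω p - (if p.2.1 then μa p.1 else μb p.1)) (obsMeasure m τ v μa μb) :=
    iIndepFun_pi (X := fun (p : Fin m × Bool × Fin τ) (x : ℝ) =>
      x - (if p.2.1 then μa p.1 else μb p.1)) (fun p => by fun_prop)
  have hind2 := hind.precomp (g := fun t : Fin τ => (i, ν, t)) (fun a b h => by simpa using h)
  refine HasSubgaussianMGF.sum_of_iIndepFun hind2 (c := fun _ => v) (fun t _ => ?_)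
  have hmp := measurePreserving_eval (fun p : Fin m × Bool × Fin τ =>
    gaussianReal (if p.2.1 then μa p.1 else μb p.1) v) (i, ν, t)
  have := gauss_subG (if ν then μa i else μb i) v
  exact HasSubgaussianMGF.of_map (μ := obsMeasure m τ v μa μb)
    (Y := Function.eval (i, ν, t)) (measurable_pi_apply _).aemeasurable (by
      unfold obsMeasure; rw [hmp.map_eq]; exact this)

instance {m τ : ℕ} (v : ℝ≥0) (μa μb : Fin m → ℝ) :
    IsProbabilityMeasure (obsMeasure m τ v μa μb) := by
  unfold obsMeasure; infer_instance

lemma bad_le {m τ : ℕ} (v : ℝ≥0) (μa μb : Fin m → ℝ) (i : Fin m) (ν : Bool) {r : ℝ}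
    (hr : 0 ≤ r) :
    (obsMeasure m τ v μa μb).real {ω | r ≤ |∑ t, (ω (i, ν, t) - (if ν then μa i else μb i))|}
      ≤ 2 * Real.exp (-r ^ 2 / (2 * (τ * v))) := by
  have h := sum_subG (τ := τ) v μa μb i ν
  have h1 := h.measure_ge_le hr
  have h2 := h.neg.measure_ge_le hr
  simp only [Finset.sum_const, Finset.card_univ, Fintype.card_fin, nsmul_eq_mul, NNReal.coe_mul,
    NNReal.coe_natCast] at h1 h2
  rw [two_mul (Real.exp _)]
  refine le_trans ?_ (add_le_add h1 h2)
  refine le_trans (measureReal_mono ?_) (measureReal_union_le _ _)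
  intro ω hω
  rw [Set.mem_setOf_eq] at hω
  exact le_abs.1 hω

/-- with `τ = ⌈32σ² log(4m/δ) m²/Δ²⌉` samples per (item, agent) pair, with
probability at least `1 - δ`, every allocation maximizing the estimated minimal negative
envy is envy-free. -/
theorem stmt0 (δ σ2 Δ : ℝ) (hδ : δ ∈ Set.Ioo (0 : ℝ) 1) (hσ2 : 0 < σ2)
    (m : ℕ) (hm : 1 ≤ m) (hΔ : 0 < Δ)
    (μa μb : Fin m → ℝ)
    (hμa : ∀ i, μa i ∈ Set.Icc (0 : ℝ) 1) (hμb : ∀ i, μb i ∈ Set.Icc (0 : ℝ) 1)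
    (hopt : optEnvy μa μb ≤ -Δ)
    (τ : ℕ) (hτ : τ = ⌈32 * σ2 * Real.log (4 * m / δ) * m ^ 2 / Δ ^ 2⌉₊) :
    ENNReal.ofReal (1 - δ) ≤
      obsMeasure m τ σ2.toNNReal μa μb
        {ω | ∀ A : Finset (Fin m),
          (∀ A' : Finset (Fin m),
              min (estS ω true A' - estS ω true A'ᶜ) (estS ω false A'ᶜ - estS ω false A') ≤
                min (estS ω true A - estS ω true Aᶜ) (estS ω false Aᶜ - estS ω false A)) →
          envy μa μb A ≤ 0} := by
  obtain ⟨hδ0, hδ1⟩ := hδ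
  have hm0 : (0 : ℝ) < m := by exact_mod_cast hm
  have hm1 : (1 : ℝ) ≤ m := by exact_mod_cast hm
  set L := Real.log (4 * m / δ) with hL
  have harg : 1 < 4 * m / δ := by rw [lt_div_iff₀ hδ0]; linarith
  have hLpos : 0 < L := Real.log_pos harg
  have hτle : 32 * σ2 * L * m ^ 2 / Δ ^ 2 ≤ τ := by rw [hτ]; exact Nat.le_ceil _
  have hτ0 : (0 : ℝ) < τ := lt_of_lt_of_le (by positivity) hτle
  set e : ℝ := Δ / (4 * m) with he
  have he0 : 0 < e := by positivity
  let B : Fin m × Bool → Set ((Fin m × Bool × Fin τ) → ℝ) := fun p =>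
    {ω | e * τ ≤ |∑ t, (ω (p.1, p.2, t) - (if p.2 then μa p.1 else μb p.1))|}
  have hBmeas : ∀ p, MeasurableSet (B p) := fun p =>
    measurableSet_le measurable_const (by fun_prop)
  have hB : ∀ p, (obsMeasure m τ σ2.toNNReal μa μb).real (B p) ≤ δ / (2 * m) := by
    intro p
    refine (bad_le σ2.toNNReal μa μb p.1 p.2 (r := e * τ) (by positivity)).trans ?_
    rw [Real.coe_toNNReal _ hσ2.le]
    have h1 : -(e * τ) ^ 2 / (2 * (τ * σ2)) ≤ -L := by
      have h2 : (e * τ) ^ 2 / (2 * (τ * σ2)) = τ * Δ ^ 2 / (32 * σ2 * m ^ 2) := by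
        rw [he]; field_simp; norm_num
      rw [neg_div, h2, neg_le_neg_iff, le_div_iff₀ (by positivity)]
      rw [div_le_iff₀ (by positivity)] at hτle
      linarith
    have h3 : Real.exp (-L) = δ / (4 * m) := by
      rw [Real.exp_neg, hL, Real.exp_log (by linarith), inv_div]
    calc _ ≤ 2 * Real.exp (-L) := by gcongr
      _ = δ / (2 * m) := by rw [h3]; field_simp; norm_num
  have hU : (obsMeasure m τ σ2.toNNReal μa μb).real (⋃ p, B p) ≤ δ := by
    refine (measureReal_iUnion_fintype_le _).trans ?_
    refine (Finset.sum_le_sum fun p _ => hB p).trans (le_of_eq ?_)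
    simp
    field_simp
  have hG : ENNReal.ofReal (1 - δ) ≤ obsMeasure m τ σ2.toNNReal μa μb (⋃ p, B p)ᶜ := by
    rw [← ofReal_measureReal]
    apply ENNReal.ofReal_le_ofReal
    rw [probReal_compl_eq_one_sub (MeasurableSet.iUnion hBmeas)]
    linarith
  refine hG.trans (measure_mono ?_)
  intro ω hω A hA
  have hdev : ∀ i ν, |(∑ t, ω (i, ν, t)) / (τ : ℝ) - (if ν then μa i else μb i)| ≤ e := by
    intro i ν
    have h1 : ω ∉ B (i, ν) := fun h => hω (Set.mem_iUnion.2 ⟨_, h⟩)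
    have h2 : |∑ t, (ω (i, ν, t) - (if ν then μa i else μb i))| < e * τ := not_le.1 h1
    have h3 : (∑ t, ω (i, ν, t)) / (τ : ℝ) - (if ν then μa i else μb i)
        = (∑ t, (ω (i, ν, t) - (if ν then μa i else μb i))) / τ := by
      rw [Finset.sum_sub_distrib]
      simp only [Finset.sum_const, Finset.card_univ, Fintype.card_fin, nsmul_eq_mul]
      field_simp
    rw [h3, abs_div, abs_of_pos hτ0, div_le_iff₀ hτ0]
    exact h2.le
  have hme : m * e = Δ / 4 := by rw [he]; field_simp
  have ha : ∀ S, |(estS ω true S - estS ω true Sᶜ) - (-envyAB μa S)| ≤ Δ / 4 := by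
    intro S
    have := det_dev _ μa e (fun i => by simpa using hdev i true) S
    rw [hme] at this
    unfold estS envyAB
    rwa [neg_sub]
  have hb : ∀ S, |(estS ω false Sᶜ - estS ω false S) - (-envyBA μb S)| ≤ Δ / 4 := by
    intro S
    have := det_dev _ μb e (fun i => by simpa using hdev i false) S
    rw [hme, abs_sub_comm] at this
    unfold estS envyBA
    convert this using 2
    ring
  obtain ⟨S, hS⟩ := exists_eq_ciInf_of_finite (f := fun A : Finset (Fin m) => envy μa μb A)
  have hS' : envy μa μb S ≤ -Δ := hS.trans_le hopt
  obtain ⟨hS1, hS2⟩ := max_le_iff.1 hS'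
  have a1 := abs_le.1 (ha S)
  have a2 := abs_le.1 (hb S)
  have a3 := abs_le.1 (ha A)
  have a4 := abs_le.1 (hb A)
  have hlow : 3 * Δ / 4 ≤ min (estS ω true S - estS ω true Sᶜ)
      (estS ω false Sᶜ - estS ω false S) := le_min (by linarith) (by linarith)
  obtain ⟨h5, h6⟩ := le_min_iff.1 (hlow.trans (hA S))
  exact max_le (by linarith) (by linarith)
end
end

section
/- Let Δ : ℕ → ℝ be a sequence with Δ(m) ≥ m^{1/4}(log m)² for all sufficiently large m and Δ(m)·(log m)/m → 0 as m → ∞, and set q(m) = m·⌈15 (m^{3/2}/Δ(m)²) log m + (log m)²⌉. Then there exists, for each m, a measurable allocation rule mapping the observation vector (consisting of q(m)/m i.i.d. N(μ^ν_i, 1) samples for each item i ∈ {1,…,m} and each agent ν ∈ {a,b}, all samples mutually independent) to an allocation of the m items, such that inf over all utility profiles μ^a, μ^b ∈ [0,1]^m with OptEnvy ≤ −Δ(m) of the probability that the output allocation A satisfies Envy(A) ≤ 0 tends to 1 as m → ∞. -/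
open MeasureTheory ProbabilityTheory Real Filter
open scoped ENNReal NNReal Classical

noncomputable section

lemma gauss_lin {ι : Type*} [Fintype ι] (M c : ι → ℝ) (s : Finset ι) :
    (Measure.pi fun p => gaussianReal (M p) 1).map (fun ω : ι → ℝ => ∑ p ∈ s, c p * ω p)
      = gaussianReal (∑ p ∈ s, c p * M p) (∑ p ∈ s, ‖c p‖₊ ^ 2) := by
  set P := (Measure.pi fun p => gaussianReal (M p) 1)
  have hind : iIndepFun (fun p (ω : ι → ℝ) => c p * ω p) P :=
    iIndepFun_pi (μ := fun p => gaussianReal (M p) 1) (X := fun p x => c p * x) (fun i => by fun_prop)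
  have hlaw : ∀ p, P.map (fun ω : ι → ℝ => c p * ω p) = gaussianReal (c p * M p) (‖c p‖₊ ^ 2) := by
    intro p
    have h1 : P.map (fun ω : ι → ℝ => ω p) = gaussianReal (M p) 1 :=
      (measurePreserving_eval (fun p => gaussianReal (M p) 1) p).map_eq
    have h2 := gaussianReal_map_const_mul (μ := M p) (v := 1) (c p)
    rw [← h1, Measure.map_map (by fun_prop) (by fun_prop)] at h2
    rw [show (fun ω : ι → ℝ => c p * ω p) = (fun x => c p * x) ∘ (fun ω : ι → ℝ => ω p) from rfl, h2]
    congr 1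
    ext
    simp
  induction s using Finset.induction_on with
  | empty => simp
  | insert i s hi ih =>
    have h := gaussianReal_add_gaussianReal_of_indepFun
      ((hind.indepFun_finsetSum_of_notMem (fun i => by fun_prop) hi).symm) (hlaw i)
      (by
        rw [← ih]; congr 1; ext ω; simp)
    rw [Finset.sum_insert hi, Finset.sum_insert hi, ← h]
    congr 1
    ext ω
    simp [Finset.sum_insert hi]

lemma block_indep {α β : Type*} [Fintype α] [Fintype β] (ν : α × β → Measure ℝ)
    [∀ p, IsProbabilityMeasure (ν p)] :
    iIndepFun (fun (i : α) (ω : α × β → ℝ) (j : β) => ω (i, j)) (Measure.pi ν) := by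
  rw [← Measure.infinitePi_eq_pi]
  rw [iIndepFun_iff_map_fun_eq_infinitePi_map (by fun_prop)]
  have h := Measure.infinitePi_map_curry (fun i j => ν (i, j))
  have e : ∀ i, (Measure.infinitePi ν).map (fun (ω : α × β → ℝ) (j : β) => ω (i, j)) =
      Measure.infinitePi (fun j => ν (i, j)) := fun i =>
    Measure.map_infinitePi_infinitePi_of_inj (f := fun j => (i, j)) (fun a b h => by simpa using h)
  simp_rw [e]
  exact h

lemma gauss_sign (M : ℝ) (v : ℝ≥0) (hv : v ≠ 0) (hM : 0 ≤ M) (w : ℝ) (hw0 : 0 ≤ w) (hw1 : w ≤ 1)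
    (hw : w * √v ≤ M) :
    (gaussianReal M v).real (Set.Iic 0) ≤ 1/2 - w / 8 := by
  have hP : IsProbabilityMeasure (gaussianReal M v) := inferInstance
  have hsv : 0 < √(v:ℝ) := Real.sqrt_pos.mpr (by positivity)
  -- symmetry
  have hsym : (gaussianReal M v).real (Set.Ici (2*M)) = (gaussianReal M v).real (Set.Iic 0) := by
    have h := gaussianReal_map_const_sub (μ := M) (v := v) (2*M)
    rw [show 2*M - M = M by ring] at h
    rw [measureReal_def, measureReal_def]
    congr 1
    conv_lhs => rw [← h]
    rw [Measure.map_apply (by fun_prop) measurableSet_Ici]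
    congr 1
    ext x; simp
  have hmid : w / 4 ≤ (gaussianReal M v).real (Set.Ioo 0 (2*M)) := by
    have h1 : (gaussianReal M v).real (Set.Ioo (M - w * √v) (M + w * √v)) ≤
        (gaussianReal M v).real (Set.Ioo 0 (2*M)) :=
      measureReal_mono (Set.Ioo_subset_Ioo (by linarith) (by linarith))
    refine le_trans ?_ h1
    rw [measureReal_def, gaussianReal_apply_eq_integral M hv]
    rw [ENNReal.toReal_ofReal (by
      apply setIntegral_nonneg measurableSet_Ioo
      intro x _; exact gaussianPDFReal_nonneg _ _ _)]
    have hlow : ∀ x ∈ Set.Ioo (M - w * √v) (M + w * √v), 1 / (8 * √v) ≤ gaussianPDFReal M v x := by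
      intro x hx
      rw [gaussianPDFReal]
      have h2 : (x - M)^2 ≤ v := by
        have : |x - M| ≤ √v := by
          rw [abs_le]; constructor <;> nlinarith [hx.1, hx.2]
        calc (x-M)^2 = |x-M|^2 := (sq_abs _).symm
          _ ≤ (√v)^2 := by gcongr
          _ = v := Real.sq_sqrt (by positivity)
      have hvp : (0:ℝ) < v := by positivity
      have h3 : -1/2 ≤ -(x - M)^2 / (2 * v) := by
        rw [div_le_div_iff₀ (by norm_num) (by positivity)]; linarith
      have h4 : (1/2 : ℝ) ≤ rexp (-(x - M)^2 / (2 * v)) := by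
        have := Real.add_one_le_exp (-(x - M)^2 / (2 * v))
        linarith
      have h5 : √(2 * π * v) ≤ 4 * √v := by
        rw [Real.sqrt_mul (by positivity)]
        gcongr
        rw [Real.sqrt_le_iff]
        constructor
        · norm_num
        · nlinarith [Real.pi_le_four]
      have h6 : 0 < √(2 * π * v) := Real.sqrt_pos.mpr (by positivity)
      calc 1 / (8 * √v) = (4 * √v)⁻¹ * (1/2) := by field_simp; norm_num
        _ ≤ (√(2 * π * v))⁻¹ * rexp (-(x - M)^2 / (2 * v)) := by gcongr
    calc w / 4 = ∫ x in Set.Ioo (M - w * √v) (M + w * √v), 1 / (8 * √v) := by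
          rw [setIntegral_const, measureReal_def, Real.volume_Ioo, ENNReal.toReal_ofReal (by nlinarith), smul_eq_mul]
          field_simp; ring
      _ ≤ _ := by
          apply setIntegral_mono_on
          · exact integrableOn_const (by simp)
          · exact (integrable_gaussianPDFReal M v).integrableOn
          · exact measurableSet_Ioo
          · exact hlow
  have hdisj : (gaussianReal M v).real (Set.Iic 0) + (gaussianReal M v).real (Set.Ioo 0 (2*M))
      + (gaussianReal M v).real (Set.Ici (2*M)) ≤ 1 + (gaussianReal M v).real {(0:ℝ)} := by
    have hz : (gaussianReal M v).real {(0:ℝ)} = 0 := by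
      have := nullSingletonClass_gaussianReal (μ := M) hv
      simp [measureReal_def]
    have h1 : (gaussianReal M v).real (Set.Iic 0) = (gaussianReal M v).real (Set.Iio 0) := by
      have := nullSingletonClass_gaussianReal (μ := M) hv
      rw [measureReal_def, measureReal_def]; congr 1
      exact (measure_congr Iio_ae_eq_Iic).symm
    rw [h1, hz, add_zero]
    rw [← measureReal_union, ← measureReal_union]
    · exact measureReal_le_one
    · rw [Set.disjoint_left]; rintro x (hx|hx) h
      · simp at hx h; linarith
      · simp at hx h; linarith
    · exact measurableSet_Ici
    · rw [Set.disjoint_left]; intro x hx h; simp at hx h; linarith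
    · exact measurableSet_Ioo
  have hz : (gaussianReal M v).real {(0:ℝ)} = 0 := by
    have := nullSingletonClass_gaussianReal (μ := M) hv
    simp [measureReal_def]
  linarith

lemma num_bound (a t R b p : ℝ) (ha0 : 0 ≤ a) (ha1 : a ≤ 1) (ht0 : 0 ≤ t) (ht1 : t ≤ 1/8)
    (hR : 0 < R) (hb : 0 ≤ b) (hbR : 2 * b * √R ≤ 1) (hp0 : 0 ≤ p)
    (hp : p ≤ 1/2 - (min (√R * a) 1) / 8) :
    (1 - p) * exp (-(t*a)) + p * exp (t*a) ≤
      exp (-(t/8) * (√R * (2*a*b - b^2)) + t^2/R) := by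
  have hsR : 0 < √R := Real.sqrt_pos.mpr hR
  have hRR : √R * √R = R := Real.mul_self_sqrt hR.le
  have hx0 : 0 ≤ t * a := by positivity
  have hx1 : t * a ≤ 1 := by nlinarith
  have hw0 : 0 ≤ min (√R * a) 1 := le_min (by positivity) zero_le_one
  have e1 := (abs_le.1 (Real.abs_exp_sub_one_sub_id_le (x := t*a) (by rw [abs_le]; constructor <;> linarith))).2
  have e2 := (abs_le.1 (Real.abs_exp_sub_one_sub_id_le (x := -(t*a)) (by rw [abs_le]; constructor <;> linarith))).2
  have e3 : (1 - p) * exp (-(t*a)) + p * exp (t*a) ≤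
      1 - (t*a) * (1 - 2*p) + (t*a)^2 := by
    have h1 : (1-p) * exp (-(t*a)) ≤ (1-p) * (1 - t*a + (t*a)^2) :=
      mul_le_mul_of_nonneg_left (by nlinarith) (by linarith)
    have h2 : p * exp (t*a) ≤ p * (1 + t*a + (t*a)^2) :=
      mul_le_mul_of_nonneg_left (by nlinarith) (by linarith)
    nlinarith
  have e4 := Real.add_one_le_exp (-((t*a) * (1 - 2*p)) + (t*a)^2)
  refine (e3.trans (by linarith)).trans (Real.exp_le_exp.2 ?_)
  have e5 : (t*a) * (min (√R * a) 1 / 4) ≤ (t*a) * (1 - 2*p) :=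
    mul_le_mul_of_nonneg_left (by linarith) hx0
  have hs : √R * (2*a*b - b^2) ≤ √R * a^2 :=
    mul_le_mul_of_nonneg_left (by nlinarith [sq_nonneg (a-b)]) hsR.le
  rcases le_total (√R * a) 1 with h | h
  · rw [min_eq_left h] at e5
    have h1 : (t*a)^2 ≤ t^2 / R := by
      rw [le_div_iff₀ hR]
      have : (√R * a)^2 ≤ 1 := by nlinarith [mul_nonneg hsR.le ha0]
      nlinarith [sq_nonneg t, mul_le_mul_of_nonneg_left this (sq_nonneg t)]
    have h2 : t * (√R * (2*a*b - b^2)) ≤ t * (√R * a^2) := mul_le_mul_of_nonneg_left hs ht0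
    have h3 : 0 ≤ t * (√R * a^2) := by positivity
    nlinarith
  · rw [min_eq_right h] at e5
    have h0 : t * a ≤ 1/8 := by nlinarith
    have h1 : (t*a)^2 ≤ (t*a)/8 := by nlinarith [mul_le_mul_of_nonneg_left h0 hx0]
    have h2 : √R * (2*a*b - b^2) ≤ a := by nlinarith [mul_nonneg hsR.le (sq_nonneg b)]
    have h3 : t * (√R * (2*a*b - b^2)) ≤ t * a := mul_le_mul_of_nonneg_left h2 ht0
    have h4 : 0 ≤ t^2/R := by positivity
    nlinarith

lemma integral_two {Ω : Type*} [MeasurableSpace Ω] (P : Measure Ω) [IsProbabilityMeasure P]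
    (S : Set Ω) (hS : MeasurableSet S) (A B : ℝ) :
    ∫ ω, (if ω ∈ S then A else B) ∂P = P.real S * A + (1 - P.real S) * B := by
  have : (fun ω => if ω ∈ S then A else B) = fun ω => S.indicator (fun _ => A - B) ω + B := by
    ext ω; by_cases h : ω ∈ S <;> simp [h]
  rw [this, integral_add ((integrable_const _).indicator hS) (integrable_const _),
    integral_indicator hS]
  simp
  ring

lemma mgf_sign {Ω : Type*} [MeasurableSpace Ω] (P : Measure Ω) [IsProbabilityMeasure P]
    (Z : Ω → ℝ) (hZ : Measurable Z) (g R : ℝ) (v : ℝ≥0) (hv : v ≠ 0) (hvR : (v:ℝ) ≤ R)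
    (hlaw : P.map Z = gaussianReal (R * g) v) (t b : ℝ) (hg : |g| ≤ 1)
    (ht0 : 0 ≤ t) (ht1 : t ≤ 1/8) (hb : 0 ≤ b) (hbR : 2 * b * √R ≤ 1) :
    ∫ ω, exp (-t * (g * (if 0 < Z ω then 1 else -1))) ∂P ≤
      exp (-(t/8) * (√R * (2 * |g| * b - b^2)) + t^2/R) := by
  have hR : 0 < R := lt_of_lt_of_le (by positivity) hvR
  have hsR : 0 < √R := Real.sqrt_pos.mpr hR
  have hRR : √R * √R = R := Real.mul_self_sqrt hR.le
  have hsv : √(v:ℝ) ≤ √R := Real.sqrt_le_sqrt hvR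
  have hS : MeasurableSet {ω | 0 < Z ω} := measurableSet_lt measurable_const hZ
  have key : ∀ a : ℝ, 0 ≤ a → min (√R * a) 1 * √(v:ℝ) ≤ R * a := by
    intro a ha
    calc min (√R * a) 1 * √(v:ℝ) ≤ (√R * a) * √R := by
          gcongr
          exact min_le_left _ _
      _ = R * a := by linear_combination a * hRR
  have hI : ∫ ω, exp (-t * (g * (if 0 < Z ω then 1 else -1))) ∂P =
      P.real {ω | 0 < Z ω} * exp (-(t*g)) + (1 - P.real {ω | 0 < Z ω}) * exp (t * g) := by
    rw [← integral_two P _ hS]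
    congr 1; ext ω
    by_cases h : 0 < Z ω <;> simp [h]
  have hpos : P.real {ω | 0 < Z ω} = (gaussianReal (R*g) v).real (Set.Ioi 0) := by
    rw [← hlaw, measureReal_def, measureReal_def, Measure.map_apply hZ measurableSet_Ioi]; rfl
  have hcompl : 1 - P.real {ω | 0 < Z ω} = (gaussianReal (R*g) v).real (Set.Iic 0) := by
    rw [hpos, ← probReal_compl_eq_one_sub measurableSet_Ioi, Set.compl_Ioi]
  rw [hI]
  rcases le_total 0 g with h0 | h0
  · have hn := gauss_sign (R*g) v hv (by positivity) (min (√R * g) 1)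
      (le_min (by positivity) zero_le_one) (min_le_right _ _) (key g h0)
    rw [abs_of_nonneg h0] at hg ⊢
    have := num_bound g t R b (1 - P.real {ω | 0 < Z ω}) h0 hg ht0 ht1 hR hb hbR
      (by rw [hcompl]; exact measureReal_nonneg) (by rw [hcompl]; exact hn)
    rwa [sub_sub_cancel] at this
  · have h0' : 0 ≤ -g := by linarith
    have hn := gauss_sign (R*(-g)) v hv (by positivity) (min (√R * (-g)) 1)
      (le_min (by positivity) zero_le_one) (min_le_right _ _) (key _ h0')
    rw [abs_of_nonpos h0] at hg ⊢
    have hm : P.real {ω | 0 < Z ω} ≤ (gaussianReal (R*(-g)) v).real (Set.Iic 0) := by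
      rw [hpos, mul_neg, ← gaussianReal_map_neg]
      rw [measureReal_def, measureReal_def, Measure.map_apply (by fun_prop) measurableSet_Iic]
      apply ENNReal.toReal_mono (measure_ne_top _ _)
      apply measure_mono
      intro x hx; simp at hx ⊢; linarith
    have := num_bound (-g) t R b (P.real {ω | 0 < Z ω}) h0' hg ht0 ht1 hR hb hbR
      measureReal_nonneg (hm.trans hn)
    have e1 : -(t * -g) = t * g := by ring
    have e2 : t * -g = -(t * g) := by ring
    rw [e1, e2] at this
    linarith

lemma mgf_noise {Ω : Type*} [MeasurableSpace Ω] (P : Measure Ω) [IsProbabilityMeasure P]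
    (s N : Ω → ℝ) (hs : Measurable s) (hN : Measurable N) (hpm : ∀ ω, s ω = 1 ∨ s ω = -1)
    (hind : IndepFun s N P) (V : ℝ≥0) (hlaw : P.map N = gaussianReal 0 V) (t : ℝ) :
    Integrable (fun ω => exp (t * (s ω * N ω))) P ∧
    mgf (fun ω => s ω * N ω) P t = exp (V * t^2/2) := by
  have hIe : ∀ t : ℝ, Integrable (fun ω => exp (t * N ω)) P := by
    intro t
    have := integrable_exp_mul_gaussianReal (μ := 0) (v := V) t
    rw [← hlaw] at this
    exact this.comp_measurable hN
  have hmgf : ∀ t : ℝ, ∫ ω, exp (t * N ω) ∂P = exp (V * t^2/2) := by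
    intro t
    have := mgf_gaussianReal hlaw t
    rw [mgf] at this
    rw [this]; simp
  set φ : ℝ → ℝ := fun x => if x = 1 then 1 else 0 with hφ
  set ψ : ℝ → ℝ := fun x => if x = 1 then 0 else 1 with hψ
  have mφ : Measurable φ := Measurable.ite (measurableSet_singleton 1) measurable_const measurable_const
  have mψ : Measurable ψ := Measurable.ite (measurableSet_singleton 1) measurable_const measurable_const
  have hdec : (fun ω => exp (t * (s ω * N ω))) = fun ω => φ (s ω) * exp (t * N ω) + ψ (s ω) * exp (-t * N ω) := by
    ext ω
    rcases hpm ω with h | h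
    · simp [h, hφ, hψ]
    · have : (-1:ℝ) ≠ 1 := by norm_num
      simp [h, hφ, hψ, this]
  have b1 : ∀ ω, ‖φ (s ω)‖ ≤ 1 := by intro ω; simp only [hφ]; split_ifs <;> simp
  have b2 : ∀ ω, ‖ψ (s ω)‖ ≤ 1 := by intro ω; simp only [hψ]; split_ifs <;> simp
  have i1 : Integrable (fun ω => φ (s ω) * exp (t * N ω)) P :=
    (hIe t).bdd_mul (mφ.comp hs).aestronglyMeasurable (Eventually.of_forall b1)
  have i2 : Integrable (fun ω => ψ (s ω) * exp (-t * N ω)) P :=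
    (hIe (-t)).bdd_mul (mψ.comp hs).aestronglyMeasurable (Eventually.of_forall b2)
  refine ⟨by rw [hdec]; exact i1.add i2, ?_⟩
  rw [mgf, hdec, integral_add i1 i2]
  have ind1 : IndepFun (fun ω => φ (s ω)) (fun ω => exp (t * N ω)) P :=
    hind.comp mφ (by fun_prop : Measurable fun x : ℝ => exp (t * x))
  have ind2 : IndepFun (fun ω => ψ (s ω)) (fun ω => exp (-t * N ω)) P :=
    hind.comp mψ (by fun_prop : Measurable fun x : ℝ => exp (-t * x))
  rw [ind1.integral_fun_mul_eq_mul_integral (mφ.comp hs).aestronglyMeasurable (hIe t).aestronglyMeasurable,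
    ind2.integral_fun_mul_eq_mul_integral (mψ.comp hs).aestronglyMeasurable (hIe (-t)).aestronglyMeasurable,
    hmgf, hmgf]
  have : ∫ ω, φ (s ω) ∂P + ∫ ω, ψ (s ω) ∂P = 1 := by
    rw [← integral_add]
    · rw [show (fun ω => φ (s ω) + ψ (s ω)) = fun _ => (1:ℝ) by
        ext ω; simp only [hφ, hψ]; split_ifs <;> simp]
      simp
    · exact Integrable.of_bound (mφ.comp hs).aestronglyMeasurable 1 (Eventually.of_forall b1)
    · exact Integrable.of_bound (mψ.comp hs).aestronglyMeasurable 1 (Eventually.of_forall b2)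
  rw [neg_sq, ← add_mul, this, one_mul]

/-- coefficients of the batch-one test statistic -/
def cf (m τ k : ℕ) (p : Bool × Fin τ) : ℝ :=
  if p.2.val < τ / 2 then (if p.1 then (k:ℝ)/m else -(1 - (k:ℝ)/m)) else 0

def tst (m τ k : ℕ) (x : Bool × Fin τ → ℝ) : ℝ := ∑ p, cf m τ k p * x p

/-- the sign of an item at level `k` -/
def sgb (m τ k : ℕ) (x : Bool × Fin τ → ℝ) : ℝ :=
  if k = 0 then -1 else if m ≤ k then 1 else if 0 < tst m τ k x then 1 else -1

def df (τ : ℕ) (ν : Bool) (p : Bool × Fin τ) : ℝ :=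
  if p.1 = ν ∧ ¬ p.2.val < τ / 2 then 1 else 0

/-- batch-two sum -/
def nb (τ : ℕ) (ν : Bool) (x : Bool × Fin τ → ℝ) : ℝ := ∑ p, df τ ν p * x p

def blk (τ : ℕ) (x y : ℝ) : Measure (Bool × Fin τ → ℝ) :=
  Measure.pi fun p => gaussianReal (if p.1 then x else y) 1

instance (τ : ℕ) (x y : ℝ) : IsProbabilityMeasure (blk τ x y) := by
  unfold blk; infer_instance

lemma measurable_tst (m τ k : ℕ) : Measurable (tst m τ k) := by
  unfold tst; fun_prop

lemma measurable_sgb (m τ k : ℕ) : Measurable (sgb m τ k) := by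
  unfold sgb
  split_ifs
  · exact measurable_const
  · exact measurable_const
  · exact Measurable.ite (measurableSet_lt measurable_const (measurable_tst m τ k))
      measurable_const measurable_const

lemma measurable_nb (τ : ℕ) (ν : Bool) : Measurable (nb τ ν) := by
  unfold nb; fun_prop

lemma sgb_pm (m τ k : ℕ) (x) : sgb m τ k x = 1 ∨ sgb m τ k x = -1 := by
  unfold sgb; split_ifs <;> simp

lemma sum_lt (τ : ℕ) (z : ℝ) : ∑ t : Fin τ, (if t.val < τ/2 then z else 0) = ((τ/2 : ℕ) : ℝ) * z := by
  rw [Fin.sum_univ_eq_sum_range (fun t => if t < τ/2 then z else 0), Finset.sum_ite]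
  simp only [Finset.sum_const, smul_zero, add_zero, nsmul_eq_mul]
  congr 2
  rw [show (Finset.range τ).filter (fun t => t < τ/2) = Finset.range (τ/2) by
    ext t; simp; omega]
  simp

lemma sum_ge (τ : ℕ) (z : ℝ) : ∑ t : Fin τ, (if ¬ t.val < τ/2 then z else 0) = ((τ - τ/2 : ℕ) : ℝ) * z := by
  have h1 : ∑ t : Fin τ, (if ¬ t.val < τ/2 then z else 0) + ∑ t : Fin τ, (if t.val < τ/2 then z else 0) = τ * z := by
    rw [← Finset.sum_add_distrib]
    rw [Finset.sum_congr rfl (g := fun _ => z) (fun t _ => by split_ifs <;> simp)]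
    simp
  rw [sum_lt] at h1
  rw [Nat.cast_sub (Nat.div_le_self _ _)]
  linarith

lemma tst_law (m τ k : ℕ) (x y : ℝ) :
    (blk τ x y).map (tst m τ k) = gaussianReal (((τ/2 : ℕ) : ℝ) * ((k:ℝ)/m * x - (1 - (k:ℝ)/m) * y))
      (∑ p, ‖cf m τ k p‖₊ ^ 2) := by
  have h := gauss_lin (fun p : Bool × Fin τ => if p.1 then x else y) (cf m τ k) Finset.univ
  have e : ∑ p : Bool × Fin τ, cf m τ k p * (if p.1 then x else y) =
      ((τ/2 : ℕ) : ℝ) * ((k:ℝ)/m * x - (1 - (k:ℝ)/m) * y) := by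
    rw [Fintype.sum_prod_type, Fintype.sum_bool]
    simp only [cf, ite_mul, zero_mul]
    simp only [if_true, Bool.false_eq_true, if_false]
    rw [sum_lt, sum_lt]; ring
  rw [e] at h
  exact h

lemma tst_var (m τ k : ℕ) :
    ((∑ p, ‖cf m τ k p‖₊ ^ 2 : ℝ≥0) : ℝ) = ((τ/2 : ℕ) : ℝ) * (((k:ℝ)/m)^2 + (1 - (k:ℝ)/m)^2) := by
  push_cast
  simp only [Real.norm_eq_abs, sq_abs]
  rw [Fintype.sum_prod_type, Fintype.sum_bool]
  simp only [cf, ite_pow, zero_pow (two_ne_zero)]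
  simp only [if_true, Bool.false_eq_true, if_false]
  rw [sum_lt, sum_lt]; ring

lemma nb_law (τ : ℕ) (ν : Bool) (x y : ℝ) :
    (blk τ x y).map (fun ω => nb τ ν ω - ((τ - τ/2 : ℕ) : ℝ) * (if ν then x else y)) =
      gaussianReal 0 ((τ - τ/2 : ℕ) : ℝ≥0) := by
  have h := gauss_lin (fun p : Bool × Fin τ => if p.1 then x else y) (df τ ν) Finset.univ
  have e : ∑ p : Bool × Fin τ, df τ ν p * (if p.1 then x else y) =
      ((τ - τ/2 : ℕ) : ℝ) * (if ν then x else y) := by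
    rw [Fintype.sum_prod_type, Fintype.sum_bool]
    simp only [df, ite_mul, zero_mul, one_mul]
    cases ν
    · simp only [Bool.true_eq_false, false_and, if_false, true_and, Finset.sum_const_zero, zero_add, Bool.false_eq_true]
      rw [sum_ge]
    · simp only [Bool.false_eq_true, false_and, if_false, true_and, Finset.sum_const_zero, add_zero, if_true]
      rw [sum_ge]
  have e2 : (∑ p, ‖df τ ν p‖₊ ^ 2 : ℝ≥0) = ((τ - τ/2 : ℕ) : ℝ≥0) := by
    apply NNReal.coe_injective
    simp only [NNReal.coe_sum, NNReal.coe_pow, coe_nnnorm, NNReal.coe_natCast]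
    simp only [Real.norm_eq_abs, sq_abs]
    rw [Fintype.sum_prod_type, Fintype.sum_bool]
    simp only [df, ite_pow, one_pow, zero_pow (two_ne_zero)]
    cases ν
    · simp only [Bool.true_eq_false, false_and, if_false, true_and, Finset.sum_const_zero, zero_add]
      rw [sum_ge, mul_one]
    · simp only [Bool.false_eq_true, false_and, if_false, true_and, Finset.sum_const_zero, add_zero]
      rw [sum_ge, mul_one]
  rw [e, e2] at h
  have h2 := gaussianReal_map_sub_const (μ := ((τ - τ/2 : ℕ) : ℝ) * (if ν then x else y)) (v := ((τ - τ/2 : ℕ) : ℝ≥0))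
    (((τ - τ/2 : ℕ) : ℝ) * (if ν then x else y))
  rw [sub_self, ← h, Measure.map_map (by fun_prop) (by fun_prop)] at h2
  rw [← h2]
  rfl

lemma sgb_indep (m τ k : ℕ) (ν : Bool) (x y : ℝ) :
    IndepFun (sgb m τ k) (nb τ ν) (blk τ x y) := by
  have hind : iIndepFun (fun p (ω : Bool × Fin τ → ℝ) => ω p) (blk τ x y) :=
    iIndepFun_pi (X := fun p x => x) (fun i => by fun_prop)
  set S : Finset (Bool × Fin τ) := Finset.univ.filter (fun p => p.2.val < τ/2) with hS
  set T : Finset (Bool × Fin τ) := Finset.univ.filter (fun p => ¬ p.2.val < τ/2) with hT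
  have h := hind.indepFun_finset S T (Finset.disjoint_filter_filter_not _ _ _) (fun i => by fun_prop)
  have e1 : ∀ ω, tst m τ k ω = ∑ p : S, cf m τ k p * ω p := by
    intro ω
    rw [tst, Finset.sum_coe_sort S (fun p => cf m τ k p * ω p)]
    symm
    apply Finset.sum_subset (Finset.subset_univ _)
    intro p _ hp
    simp only [hS, Finset.mem_filter, Finset.mem_univ, true_and] at hp
    simp [cf, hp]
  have e2 : ∀ ω, nb τ ν ω = ∑ p : T, df τ ν p * ω p := by
    intro ω
    rw [nb, Finset.sum_coe_sort T (fun p => df τ ν p * ω p)]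
    symm
    apply Finset.sum_subset (Finset.subset_univ _)
    intro p _ hp
    simp only [hT, Finset.mem_filter, Finset.mem_univ, true_and] at hp
    simp [df, hp]
  have m1 : Measurable (fun z : S → ℝ => if k = 0 then (-1:ℝ) else if m ≤ k then 1 else
      if 0 < ∑ p : S, cf m τ k p * z p then 1 else -1) := by
    split_ifs
    · exact measurable_const
    · exact measurable_const
    · exact Measurable.ite (measurableSet_lt measurable_const (by fun_prop))
        measurable_const measurable_const
  have m2 : Measurable (fun z : T → ℝ => ∑ p : T, df τ ν p * z p) := by fun_prop
  have := h.comp m1 m2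
  convert this using 1
  · ext ω; simp only [sgb, e1, Function.comp]
  · ext ω; simp only [e2, Function.comp]

lemma item_noise (m τ k : ℕ) (ν : Bool) (x y t : ℝ) :
    Integrable (fun ω => exp (t * (sgb m τ k ω * (nb τ ν ω - ((τ - τ/2 : ℕ) : ℝ) * (if ν then x else y))))) (blk τ x y) ∧
    mgf (fun ω => sgb m τ k ω * (nb τ ν ω - ((τ - τ/2 : ℕ) : ℝ) * (if ν then x else y))) (blk τ x y) t
      = exp (((τ - τ/2 : ℕ) : ℝ) * t^2 / 2) := by
  have := mgf_noise (blk τ x y) (sgb m τ k) (fun ω => nb τ ν ω - ((τ - τ/2 : ℕ) : ℝ) * (if ν then x else y))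
    (measurable_sgb m τ k) ((measurable_nb τ ν).sub_const _) (sgb_pm m τ k)
    ((sgb_indep m τ k ν x y).comp measurable_id
      (by fun_prop : Measurable fun z : ℝ => z - ((τ - τ/2 : ℕ) : ℝ) * (if ν then x else y))) _ (nb_law τ ν x y) t
  simpa only [NNReal.coe_natCast] using this

lemma item_gain (m τ k : ℕ) (x y t b : ℝ) (hm : 0 < m) (hk : k ≤ m) (hx : x ∈ Set.Icc (0:ℝ) 1)
    (hy : y ∈ Set.Icc (0:ℝ) 1) (hτ : 0 < τ / 2) (ht0 : 0 ≤ t) (ht1 : t ≤ 1/8) (hb : 0 ≤ b)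
    (hbR : 2 * b * √((τ/2 : ℕ) : ℝ) ≤ 1) :
    ∫ ω, exp (-t * (((k:ℝ)/m * x - (1 - (k:ℝ)/m) * y) * sgb m τ k ω)) ∂(blk τ x y) ≤
      exp (-(t/8) * (√((τ/2 : ℕ) : ℝ) * (2 * |(k:ℝ)/m * x - (1 - (k:ℝ)/m) * y| * b - b^2))
        + t^2/((τ/2 : ℕ) : ℝ)) := by
  have hm' : (0:ℝ) < m := by exact_mod_cast hm
  have hR : (0:ℝ) < ((τ/2 : ℕ) : ℝ) := by exact_mod_cast hτ
  set R := ((τ/2 : ℕ) : ℝ) with hRdef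
  set l : ℝ := (k:ℝ)/m with hl
  have hl0 : 0 ≤ l := by positivity
  have hl1 : l ≤ 1 := by rw [hl, div_le_one hm']; exact_mod_cast hk
  set g := l * x - (1 - l) * y with hg
  have hgabs : |g| ≤ 1 := by
    rw [abs_le]; constructor <;> nlinarith [hx.1, hx.2, hy.1, hy.2]
  have detcase : ∀ a : ℝ, a = |g| → 
      exp (-(t*a)) ≤ exp (-(t/8) * (√R * (2 * |g| * b - b^2)) + t^2/R) := by
    intro a ha
    have := num_bound |g| t R b 0 (abs_nonneg _) hgabs ht0 ht1 hR hb hbR le_rfl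
      (by have := min_le_right (√R * |g|) 1; linarith)
    rw [ha]; simpa using this
  by_cases h0 : k = 0
  · have : l = 0 := by simp [hl, h0]
    have e : ∀ ω, exp (-t * (g * sgb m τ k ω)) = exp (-(t * |g|)) := by
      intro ω
      have : g ≤ 0 := by rw [hg, this]; nlinarith [hy.1]
      rw [abs_of_nonpos this, sgb, if_pos h0]; congr 1; ring
    simp only [e]
    simpa using detcase _ rfl
  by_cases h1 : m ≤ k
  · have hkm : k = m := le_antisymm hk h1
    have : l = 1 := by rw [hl, hkm]; field_simp
    have e : ∀ ω, exp (-t * (g * sgb m τ k ω)) = exp (-(t * |g|)) := by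
      intro ω
      have : 0 ≤ g := by rw [hg, this]; nlinarith [hx.1]
      rw [abs_of_nonneg this, sgb, if_neg h0, if_pos h1]; congr 1; ring
    simp only [e]
    simpa using detcase _ rfl
  have hvar := tst_var m τ k
  have hs : ∀ ω, sgb m τ k ω = if 0 < tst m τ k ω then 1 else -1 := by
    intro ω; rw [sgb, if_neg h0, if_neg h1]
  simp only [hs]
  apply mgf_sign (blk τ x y) (tst m τ k) (measurable_tst m τ k) g R _ _ _ (tst_law m τ k x y) t b hgabs ht0 ht1 hb hbR
  · intro hz
    rw [hz, NNReal.coe_zero, ← hl, ← hRdef] at hvar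
    have : 0 < R * (l^2 + (1-l)^2) := by
      apply mul_pos hR; nlinarith [sq_nonneg (2*l-1)]
    linarith
  · rw [hvar, ← hl, ← hRdef]
    nlinarith [mul_nonneg hl0 (sub_nonneg.2 hl1)]

instance (m τ : ℕ) (v : ℝ≥0) (μa μb : Fin m → ℝ) : IsProbabilityMeasure (obsMeasure m τ v μa μb) := by
  unfold obsMeasure; infer_instance

lemma obs_block (m τ : ℕ) (μa μb : Fin m → ℝ) (i : Fin m) :
    (obsMeasure m τ 1 μa μb).map (fun ω j => ω (i, j)) = blk τ (μa i) (μb i) := by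
  unfold obsMeasure blk
  rw [← Measure.infinitePi_eq_pi, ← Measure.infinitePi_eq_pi]
  exact Measure.map_infinitePi_infinitePi_of_inj
    (P := fun p : Fin m × Bool × Fin τ => gaussianReal (if p.2.1 then μa p.1 else μb p.1) 1)
    (f := fun j => (i, j)) (fun a b h => by simpa using h)

lemma obs_indep (m τ : ℕ) (μa μb : Fin m → ℝ) (F : Fin m → (Bool × Fin τ → ℝ) → ℝ)
    (hF : ∀ i, Measurable (F i)) :
    iIndepFun (fun i (ω : Fin m × Bool × Fin τ → ℝ) => F i (fun j => ω (i, j)))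
      (obsMeasure m τ 1 μa μb) :=
  (block_indep (fun p : Fin m × Bool × Fin τ => gaussianReal (if p.2.1 then μa p.1 else μb p.1) 1)).comp F hF

lemma meas_blk (m τ : ℕ) (i : Fin m) :
    Measurable (fun (ω : Fin m × Bool × Fin τ → ℝ) (j : Bool × Fin τ) => ω (i, j)) := by fun_prop

/-- Chernoff for a sum of block functions. -/
lemma obs_chernoff (m τ : ℕ) (μa μb : Fin m → ℝ) (F : Fin m → (Bool × Fin τ → ℝ) → ℝ)
    (hF : ∀ i, Measurable (F i)) (t ε : ℝ) (ht : 0 ≤ t) (B : Fin m → ℝ)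
    (hIe : ∀ i, Integrable (fun x => exp (t * F i x)) (blk τ (μa i) (μb i)))
    (hB : ∀ i, ∫ x, exp (t * F i x) ∂(blk τ (μa i) (μb i)) ≤ exp (B i)) :
    (obsMeasure m τ 1 μa μb).real {ω | ε ≤ ∑ i, F i (fun j => ω (i, j))} ≤
      exp (-t * ε + ∑ i, B i) := by
  set P := obsMeasure m τ 1 μa μb
  have hi := obs_indep m τ μa μb F hF
  have hme : ∀ i, Measurable (fun (ω : Fin m × Bool × Fin τ → ℝ) => F i (fun j => ω (i, j))) :=
    fun i => (hF i).comp (meas_blk m τ i)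
  have hIe' : ∀ i, Integrable (fun (ω : Fin m × Bool × Fin τ → ℝ) => exp (t * F i (fun j => ω (i, j)))) P := by
    intro i
    have := hIe i
    rw [← obs_block] at this
    exact this.comp_measurable (meas_blk m τ i)
  have hIe2 := hi.integrable_exp_mul_sum (t := t) (s := Finset.univ) hme (fun i _ => hIe' i)
  have h := measure_ge_le_exp_mul_mgf ε ht hIe2
  rw [hi.mgf_sum hme] at h
  have e : {ω : Fin m × Bool × Fin τ → ℝ | ε ≤ (∑ i, fun (ω : Fin m × Bool × Fin τ → ℝ) => F i (fun j => ω (i, j))) ω}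
     = {ω | ε ≤ ∑ i, F i (fun j => ω (i, j))} := by
    ext ω; simp
  rw [e] at h
  refine h.trans ?_
  rw [exp_add, exp_sum]
  gcongr with i
  · intro i _; exact mgf_nonneg
  · rw [mgf]
    refine le_trans (le_of_eq ?_) (hB i)
    rw [← obs_block m τ μa μb i, integral_map (meas_blk m τ i).aemeasurable]
    exact ((measurable_const.mul (hF i)).exp).aestronglyMeasurable

/-- level of item `i` at step `n` of the path -/
def lev (m n : ℕ) (i : Fin m) : ℕ := (n + m - 1 - i) / m

def sgn (m τ n : ℕ) (ω : Fin m × Bool × Fin τ → ℝ) (i : Fin m) : ℝ :=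
  sgb m τ (lev m n i) (fun j => ω (i, j))

def gl (m : ℕ) (μa μb : Fin m → ℝ) (k : ℕ) (i : Fin m) : ℝ :=
  (k:ℝ)/m * μa i - (1 - (k:ℝ)/m) * μb i

lemma tail_gain (m τ n : ℕ) (μa μb : Fin m → ℝ) (t b D ε : ℝ) (hm : 0 < m)
    (ha : ∀ i, μa i ∈ Set.Icc (0:ℝ) 1) (hb' : ∀ i, μb i ∈ Set.Icc (0:ℝ) 1)
    (hn : ∀ i : Fin m, lev m n i ≤ m)
    (hD : D ≤ ∑ i, |gl m μa μb (lev m n i) i|)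
    (hτ : 0 < τ / 2) (ht0 : 0 ≤ t) (ht1 : t ≤ 1/8) (hb : 0 ≤ b)
    (hbR : 2 * b * √((τ/2 : ℕ) : ℝ) ≤ 1) :
    (obsMeasure m τ 1 μa μb).real {ω | ∑ i, gl m μa μb (lev m n i) i * sgn m τ n ω i ≤ ε} ≤
      exp (t * ε - (t/8) * (√((τ/2 : ℕ) : ℝ) * (2 * D * b - m * b^2)) + m * (t^2/((τ/2 : ℕ) : ℝ))) := by
  have h := obs_chernoff m τ μa μb (fun i x => -(gl m μa μb (lev m n i) i * sgb m τ (lev m n i) x))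
    (fun i => (measurable_const.mul (measurable_sgb _ _ _)).neg) t (-ε) ht0
    (fun i => -(t/8) * (√((τ/2 : ℕ) : ℝ) * (2 * |gl m μa μb (lev m n i) i| * b - b^2))
        + t^2/((τ/2 : ℕ) : ℝ)) ?_ ?_
  · have e : {ω : Fin m × Bool × Fin τ → ℝ | -ε ≤ ∑ i, -(gl m μa μb (lev m n i) i * sgb m τ (lev m n i) (fun j => ω (i,j)))}
      = {ω | ∑ i, gl m μa μb (lev m n i) i * sgn m τ n ω i ≤ ε} := by
      ext ω
      simp [sgn]
    rw [e] at h
    refine h.trans (exp_le_exp.2 ?_)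
    rw [Finset.sum_add_distrib, ← Finset.mul_sum, ← Finset.mul_sum, Finset.sum_sub_distrib, ← Finset.sum_mul,
      ← Finset.mul_sum]
    simp only [Finset.sum_const, Finset.card_univ, Fintype.card_fin, nsmul_eq_mul]
    have h1 : 2 * D * b ≤ 2 * (∑ i, |gl m μa μb (lev m n i) i|) * b := by gcongr
    have h2 : (t/8) * (√((τ/2 : ℕ) : ℝ) * (2 * D * b - m * b^2)) ≤
      (t/8) * (√((τ/2 : ℕ) : ℝ) * (2 * (∑ i, |gl m μa μb (lev m n i) i|) * b - m * b^2)) := by gcongr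
    linarith
  · intro i
    have hbd : ∀ x, exp (t * -(gl m μa μb (lev m n i) i * sgb m τ (lev m n i) x)) ≤ exp (t * |gl m μa μb (lev m n i) i|) := by
      intro x
      apply exp_le_exp.2
      apply mul_le_mul_of_nonneg_left _ ht0
      rcases sgb_pm m τ (lev m n i) x with h | h <;> rw [h]
      · rw [mul_one]; exact neg_le_abs _
      · rw [mul_neg, mul_one, neg_neg]; exact le_abs_self _
    refine Integrable.of_bound (C := exp (t * |gl m μa μb (lev m n i) i|)) ?_ (Eventually.of_forall fun x => ?_)
    · exact ((measurable_const.mul (measurable_const.mul (measurable_sgb _ _ _)).neg).exp).aestronglyMeasurable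
    · rw [Real.norm_eq_abs, abs_of_pos (exp_pos _)]; exact hbd x
  · intro i
    have := item_gain m τ (lev m n i) (μa i) (μb i) t b hm (hn i) (ha i) (hb' i) hτ ht0 ht1 hb hbR
    refine le_trans (le_of_eq ?_) this
    congr 1; ext x; congr 1; simp only [gl]; ring

def noise (m τ n : ℕ) (ν : Bool) (μa μb : Fin m → ℝ) (ω : Fin m × Bool × Fin τ → ℝ) : ℝ :=
  ∑ i, sgn m τ n ω i * (nb τ ν (fun j => ω (i, j)) - ((τ - τ/2 : ℕ) : ℝ) * (if ν then μa i else μb i))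

lemma tail_noise (m τ n : ℕ) (ν : Bool) (μa μb : Fin m → ℝ) (η : ℝ) (hm : 0 < m) (hη : 0 ≤ η) :
    (obsMeasure m τ 1 μa μb).real {ω | ((τ - τ/2 : ℕ) : ℝ) * η ≤ |noise m τ n ν μa μb ω|} ≤
      2 * exp (-(((τ - τ/2 : ℕ) : ℝ) * η^2 / (2 * m))) := by
  have hm' : (0:ℝ) < m := by exact_mod_cast hm
  set T : ℝ := ((τ - τ/2 : ℕ) : ℝ) with hT
  have hF : ∀ i, Measurable (fun x => sgb m τ (lev m n i) x * (nb τ ν x - T * (if ν then μa i else μb i))) :=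
    fun i => (measurable_sgb _ _ _).mul ((measurable_nb _ _).sub_const _)
  have e : -(η/m) * (T * η) + ∑ i : Fin m, T * (η/m)^2/2 = -(T * η^2 / (2 * m)) := by
    simp; field_simp; ring
  have h1 := obs_chernoff m τ μa μb (fun i x => sgb m τ (lev m n i) x * (nb τ ν x - T * (if ν then μa i else μb i)))
    hF (η/m) (T * η) (by positivity) (fun i => T * (η/m)^2/2)
    (fun i => (item_noise m τ (lev m n i) ν (μa i) (μb i) (η/m)).1)
    (fun i => (item_noise m τ (lev m n i) ν (μa i) (μb i) (η/m)).2.le)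
  have h2 := obs_chernoff m τ μa μb (fun i x => -(sgb m τ (lev m n i) x * (nb τ ν x - T * (if ν then μa i else μb i))))
    (fun i => (hF i).neg) (η/m) (T * η) (by positivity) (fun i => T * (η/m)^2/2)
    (fun i => by simpa using (item_noise m τ (lev m n i) ν (μa i) (μb i) (-(η/m))).1)
    (fun i => by
      have := (item_noise m τ (lev m n i) ν (μa i) (μb i) (-(η/m))).2.le
      rw [mgf, neg_sq] at this
      simpa using this)
  rw [e] at h1 h2
  have hsub : {ω | T * η ≤ |noise m τ n ν μa μb ω|} ⊆
      {ω | T * η ≤ ∑ i, (fun x => sgb m τ (lev m n i) x * (nb τ ν x - T * (if ν then μa i else μb i))) (fun j => ω (i, j))} ∪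
      {ω | T * η ≤ ∑ i, (fun x => -(sgb m τ (lev m n i) x * (nb τ ν x - T * (if ν then μa i else μb i)))) (fun j => ω (i, j))} := by
    intro ω hω
    simp only [Set.mem_ofPred_eq, le_abs] at hω
    rcases hω with h | h
    · left; exact h
    · right
      simp only [Set.mem_ofPred_eq, Finset.sum_neg_distrib]
      exact h
  have h3 := (measureReal_mono (μ := obsMeasure m τ 1 μa μb) hsub).trans (measureReal_union_le _ _)
  linarith

lemma sgn_pm (m τ n : ℕ) (ω) (i : Fin m) : sgn m τ n ω i = 1 ∨ sgn m τ n ω i = -1 := sgb_pm _ _ _ _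

lemma sgn_abs (m τ n : ℕ) (ω) (i : Fin m) : |sgn m τ n ω i| = 1 := by
  rcases sgn_pm m τ n ω i with h | h <;> simp [h]

lemma measurable_sgn (m τ n : ℕ) (i : Fin m) : Measurable (fun ω => sgn m τ n ω i) :=
  (measurable_sgb _ _ _).comp (meas_blk m τ i)

def cand (m τ n : ℕ) (ω : Fin m × Bool × Fin τ → ℝ) : Finset (Fin m) :=
  Finset.univ.filter (fun i => sgn m τ n ω i = 1)

lemma envyAB_eq {m : ℕ} (μa : Fin m → ℝ) (A : Finset (Fin m)) :
    envyAB μa A = -∑ i, (if i ∈ A then 1 else -1) * μa i := by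
  have h1 : ∑ i ∈ A, (if i ∈ A then (1:ℝ) else -1) * μa i = ∑ i ∈ A, μa i :=
    Finset.sum_congr rfl (fun i hi => by simp [hi])
  have h2 : ∑ i ∈ Aᶜ, (if i ∈ A then (1:ℝ) else -1) * μa i = -∑ i ∈ Aᶜ, μa i := by
    rw [← Finset.sum_neg_distrib]
    refine Finset.sum_congr rfl (fun i hi => ?_)
    rw [Finset.mem_compl] at hi
    simp [hi]
  rw [envyAB, ← Finset.sum_add_sum_compl A (fun i => (if i ∈ A then (1:ℝ) else -1) * μa i), h1, h2]
  ring

lemma envyBA_eq {m : ℕ} (μb : Fin m → ℝ) (A : Finset (Fin m)) :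
    envyBA μb A = ∑ i, (if i ∈ A then 1 else -1) * μb i := by
  have := envyAB_eq μb A
  unfold envyAB at this; unfold envyBA; linarith

lemma cand_sign (m τ n : ℕ) (ω) (i : Fin m) :
    (if i ∈ cand m τ n ω then (1:ℝ) else -1) = sgn m τ n ω i := by
  unfold cand
  rcases sgn_pm m τ n ω i with h | h
  · simp [h]
  · have : (-1:ℝ) ≠ 1 := by norm_num
    simp [h, this]

def fa (m τ n : ℕ) (μa : Fin m → ℝ) (ω : Fin m × Bool × Fin τ → ℝ) : ℝ := ∑ i, sgn m τ n ω i * μa i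
def fb (m τ n : ℕ) (μb : Fin m → ℝ) (ω : Fin m × Bool × Fin τ → ℝ) : ℝ := -∑ i, sgn m τ n ω i * μb i

lemma envy_cand (m τ n : ℕ) (μa μb : Fin m → ℝ) (ω) (h1 : 0 ≤ fa m τ n μa ω) (h2 : 0 ≤ fb m τ n μb ω) :
    envy μa μb (cand m τ n ω) ≤ 0 := by
  unfold envy
  rw [envyAB_eq, envyBA_eq]
  simp only [cand_sign]
  unfold fa at h1; unfold fb at h2
  apply max_le <;> linarith

lemma dual_bound {m : ℕ} (μa μb : Fin m → ℝ) (Δ l : ℝ) (h : optEnvy μa μb ≤ -Δ) (h0 : 0 ≤ l) (h1 : l ≤ 1) :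
    Δ ≤ ∑ i, |l * μa i - (1 - l) * μb i| := by
  obtain ⟨A, hA⟩ := exists_eq_ciInf_of_finite (f := fun A : Finset (Fin m) => envy μa μb A)
  rw [optEnvy, ← hA] at h
  have ha : envyAB μa A ≤ -Δ := (le_max_left _ _).trans h
  have hb : envyBA μb A ≤ -Δ := (le_max_right _ _).trans h
  rw [envyAB_eq] at ha; rw [envyBA_eq] at hb
  have e : ∑ i, (if i ∈ A then (1:ℝ) else -1) * (l * μa i - (1 - l) * μb i) =
      l * (∑ i, (if i ∈ A then (1:ℝ) else -1) * μa i) - (1 - l) * ∑ i, (if i ∈ A then (1:ℝ) else -1) * μb i := by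
    rw [Finset.mul_sum, Finset.mul_sum, ← Finset.sum_sub_distrib]
    apply Finset.sum_congr rfl; intros; ring
  have h2 : ∑ i, (if i ∈ A then (1:ℝ) else -1) * (l * μa i - (1 - l) * μb i) ≤
      ∑ i, |l * μa i - (1 - l) * μb i| := by
    apply Finset.sum_le_sum; intro i _
    split_ifs
    · rw [one_mul]; exact le_abs_self _
    · rw [neg_one_mul]; exact neg_le_abs _
  nlinarith

lemma lev_bounds (m n : ℕ) (i : Fin m) : n / m ≤ lev m n i ∧ lev m n i ≤ n / m + 1 := by
  have hm : 0 < m := i.pos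
  have hi := i.isLt
  unfold lev
  constructor
  · exact Nat.div_le_div_right (by omega)
  · rw [← Nat.add_div_right _ hm]
    exact Nat.div_le_div_right (by omega)

lemma lev_le (m n : ℕ) (hn : n ≤ m * m) (i : Fin m) : lev m n i ≤ m := by
  have hm : 0 < m := i.pos
  unfold lev
  apply Nat.lt_succ_iff.1
  rw [Nat.div_lt_iff_lt_mul hm, Nat.succ_mul]
  omega

lemma gl_diff (m n : ℕ) (μa μb : Fin m → ℝ) (ha : ∀ i, μa i ∈ Set.Icc (0:ℝ) 1)
    (hb : ∀ i, μb i ∈ Set.Icc (0:ℝ) 1) (i : Fin m) :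
    |gl m μa μb (lev m n i) i - gl m μa μb (n/m) i| ≤ 2 / m := by
  have hm : (0:ℝ) < m := by exact_mod_cast i.pos
  obtain ⟨h1, h2⟩ := lev_bounds m n i
  have h1' : ((n/m : ℕ) : ℝ) ≤ lev m n i := by exact_mod_cast h1
  have h2' : (lev m n i : ℝ) ≤ ((n/m : ℕ) : ℝ) + 1 := by exact_mod_cast h2
  have e : gl m μa μb (lev m n i) i - gl m μa μb (n/m) i =
      (((lev m n i : ℝ) - ((n/m : ℕ) : ℝ)) * (μa i + μb i)) / m := by
    unfold gl; field_simp; ring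
  have hs : 0 ≤ μa i + μb i ∧ μa i + μb i ≤ 2 :=
    ⟨by linarith [(ha i).1, (hb i).1], by linarith [(ha i).2, (hb i).2]⟩
  rw [e, abs_div, abs_of_pos hm]
  gcongr
  rw [abs_of_nonneg (mul_nonneg (by linarith) hs.1)]
  nlinarith [hs.1, hs.2]

lemma gl_sum (m n : ℕ) (μa μb : Fin m → ℝ) (Δ : ℝ) (hm : 0 < m) (hn : n ≤ m * m)
    (ha : ∀ i, μa i ∈ Set.Icc (0:ℝ) 1) (hb : ∀ i, μb i ∈ Set.Icc (0:ℝ) 1)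
    (h : optEnvy μa μb ≤ -Δ) : Δ - 2 ≤ ∑ i, |gl m μa μb (lev m n i) i| := by
  have hm' : (0:ℝ) < m := by exact_mod_cast hm
  have hk : n / m ≤ m := by
    calc n / m ≤ m * m / m := Nat.div_le_div_right hn
      _ = m := Nat.mul_div_cancel _ hm
  have h1 := dual_bound μa μb Δ (((n/m : ℕ) : ℝ)/m) h (by positivity)
    (by rw [div_le_one hm']; exact_mod_cast hk)
  have h2 : ∑ i, |gl m μa μb (n/m) i| ≤ ∑ i, (|gl m μa μb (lev m n i) i| + 2 / m) := by
    apply Finset.sum_le_sum; intro i _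
    have h3 := gl_diff m n μa μb ha hb i
    have h4 := abs_sub_abs_le_abs_sub (gl m μa μb (n/m) i) (gl m μa μb (lev m n i) i)
    rw [abs_sub_comm] at h4
    linarith
  rw [Finset.sum_add_distrib] at h2
  simp only [Finset.sum_const, Finset.card_univ, Fintype.card_fin, nsmul_eq_mul] at h2
  rw [mul_div_cancel₀ _ hm'.ne'] at h2
  unfold gl at h2 ⊢
  linarith

lemma lev_step (m n : ℕ) (i : Fin m) (h : i.val ≠ n % m) : lev m (n+1) i = lev m n i := by
  have hm : 0 < m := i.pos
  have hi := i.isLt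
  unfold lev
  rw [show n + 1 + m - 1 - i.val = (n + m - 1 - i.val) + 1 by omega, Nat.succ_div, if_neg]
  · rfl
  · intro hd
    rw [show n + m - 1 - i.val + 1 = n + (m - i.val) by omega] at hd
    apply h
    have h2 : (n + (m - i.val) + i.val) % m = i.val := by
      rw [Nat.add_mod, Nat.mod_eq_zero_of_dvd hd]; simp [Nat.mod_eq_of_lt hi]
    rw [show n + (m - i.val) + i.val = n + m by omega, Nat.add_mod_right] at h2
    exact h2.symm

lemma path_exists (m τ : ℕ) (μa μb : Fin m → ℝ) (ω) (ε : ℝ) (hm : 0 < m)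
    (ha : ∀ i, μa i ∈ Set.Icc (0:ℝ) 1) (hb : ∀ i, μb i ∈ Set.Icc (0:ℝ) 1)
    (h : ∀ n ≤ m * m, ε ≤ ∑ i, gl m μa μb (lev m n i) i * sgn m τ n ω i) :
    ∃ n ≤ m * m, ε - 6 ≤ fa m τ n μa ω ∧ ε - 6 ≤ fb m τ n μb ω := by
  have hm' : (0:ℝ) < m := by exact_mod_cast hm
  set D : ℕ → ℝ := fun n => fa m τ n μa ω - fb m τ n μb ω with hD
  have hDe : ∀ n, D n = ∑ i, sgn m τ n ω i * (μa i + μb i) := by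
    intro n; simp only [hD, fa, fb, mul_add, Finset.sum_add_distrib]; ring
  have hs : ∀ i, 0 ≤ μa i + μb i ∧ μa i + μb i ≤ 2 := fun i =>
    ⟨by linarith [(ha i).1, (hb i).1], by linarith [(ha i).2, (hb i).2]⟩
  have hD0 : D 0 ≤ 0 := by
    rw [hDe]
    apply Finset.sum_nonpos
    intro i _
    have : lev m 0 i = 0 := by unfold lev; exact Nat.div_eq_of_lt (by omega)
    rw [sgn, this, sgb, if_pos rfl]; linarith [(hs i).1]
  have hDm : 0 ≤ D (m * m) := by
    rw [hDe]
    apply Finset.sum_nonneg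
    intro i _
    have h1 : m ≤ lev m (m*m) i := by
      have := (lev_bounds m (m*m) i).1
      rwa [Nat.mul_div_cancel _ hm] at this
    rw [sgn, sgb, if_neg (by omega), if_pos h1]; linarith [(hs i).1]
  have hstep : ∀ n, D (n+1) ≤ D n + 4 := by
    intro n
    rw [hDe, hDe, ← sub_le_iff_le_add', ← Finset.sum_sub_distrib]
    rw [Finset.sum_eq_single (⟨n % m, Nat.mod_lt _ hm⟩ : Fin m)]
    · set j : Fin m := ⟨n % m, Nat.mod_lt _ hm⟩
      rcases sgn_pm m τ n ω j with h1 | h1 <;> rcases sgn_pm m τ (n+1) ω j with h2 | h2 <;>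
        rw [h1, h2] <;> linarith [(hs j).1, (hs j).2]
    · intro i _ hi
      have : lev m (n+1) i = lev m n i := lev_step m n i (fun h => hi (Fin.ext h))
      simp only [sgn, this, sub_self]
    · simp
  have hex : ∃ n, 0 ≤ D n := ⟨_, hDm⟩
  set n := Nat.find hex with hn
  have hn0 : 0 ≤ D n := Nat.find_spec hex
  have hnle : n ≤ m * m := Nat.find_min' hex hDm
  have hn4 : D n ≤ 4 := by
    rcases Nat.eq_zero_or_pos n with h0 | h0
    · rw [h0]; linarith
    · have h1 : ¬ 0 ≤ D (n-1) := Nat.find_min hex (by omega)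
      have h2 := hstep (n-1)
      rw [Nat.sub_add_cancel h0] at h2
      linarith
  refine ⟨n, hnle, ?_⟩
  have hk : n / m ≤ m := by
    calc n / m ≤ m * m / m := Nat.div_le_div_right hnle
      _ = m := Nat.mul_div_cancel _ hm
  set l : ℝ := ((n/m : ℕ) : ℝ)/m with hl
  have hl0 : 0 ≤ l := by positivity
  have hl1 : l ≤ 1 := by rw [hl, div_le_one hm']; exact_mod_cast hk
  have hS : ε - 2 ≤ l * fa m τ n μa ω + (1 - l) * fb m τ n μb ω := by
    have e : l * fa m τ n μa ω + (1 - l) * fb m τ n μb ω = ∑ i, gl m μa μb (n/m) i * sgn m τ n ω i := by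
      unfold fa fb gl
      rw [mul_neg, ← sub_eq_add_neg, Finset.mul_sum, Finset.mul_sum, ← Finset.sum_sub_distrib]
      apply Finset.sum_congr rfl; intro i _; rw [hl]; ring
    rw [e]
    have h1 : ∑ i, gl m μa μb (lev m n i) i * sgn m τ n ω i ≤
        ∑ i, (gl m μa μb (n/m) i * sgn m τ n ω i + 2/m) := by
      apply Finset.sum_le_sum; intro i _
      have h3 := abs_le.1 (gl_diff m n μa μb ha hb i)
      rcases sgn_pm m τ n ω i with h | h <;> rw [h] <;> linarith [h3.1, h3.2]
    rw [Finset.sum_add_distrib] at h1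
    simp only [Finset.sum_const, Finset.card_univ, Fintype.card_fin, nsmul_eq_mul] at h1
    rw [mul_div_cancel₀ _ hm'.ne'] at h1
    have := h n hnle
    linarith
  have hDn : D n = fa m τ n μa ω - fb m τ n μb ω := rfl
  constructor <;> nlinarith

/-- acceptance test on batch two -/
def okk (m τ : ℕ) (θ : ℝ) (n : ℕ) (ω : Fin m × Bool × Fin τ → ℝ) : Prop :=
  θ ≤ ∑ i, sgn m τ n ω i * nb τ true (fun j => ω (i, j)) ∧
  θ ≤ -∑ i, sgn m τ n ω i * nb τ false (fun j => ω (i, j))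

def allocAux (m τ : ℕ) (θ : ℝ) : ℕ → (Fin m × Bool × Fin τ → ℝ) → Finset (Fin m)
  | 0, _ => ∅
  | N + 1, ω => if okk m τ θ N ω then cand m τ N ω else allocAux m τ θ N ω

lemma meas_okk (m τ : ℕ) (θ : ℝ) (n : ℕ) : MeasurableSet {ω | okk m τ θ n ω} := by
  have h : ∀ ν, Measurable (fun ω : Fin m × Bool × Fin τ → ℝ => ∑ i, sgn m τ n ω i * nb τ ν (fun j => ω (i, j))) := by
    intro ν
    apply Finset.measurable_sum
    intro i _
    exact (measurable_sgn m τ n i).mul ((measurable_nb τ ν).comp (meas_blk m τ i))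
  exact (measurableSet_le measurable_const (h true)).inter
    (measurableSet_le measurable_const (h false).neg)

lemma meas_cand (m τ n : ℕ) (A : Finset (Fin m)) : MeasurableSet {ω | cand m τ n ω = A} := by
  have : {ω | cand m τ n ω = A} = ⋂ i : Fin m, {ω | sgn m τ n ω i = 1 ↔ i ∈ A} := by
    ext ω; simp [cand, Finset.ext_iff]
  rw [this]
  apply MeasurableSet.iInter
  intro i
  have hm : MeasurableSet {ω | sgn m τ n ω i = 1} := measurable_sgn m τ n i (measurableSet_singleton 1)
  by_cases hi : i ∈ A
  · simpa [hi] using hm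
  · have h3 : {ω | sgn m τ n ω i = 1 ↔ i ∈ A} = {ω | sgn m τ n ω i = 1}ᶜ := by
      ext ω; simp [hi]
    rw [h3]; exact hm.compl

lemma meas_alloc (m τ : ℕ) (θ : ℝ) (N : ℕ) (A : Finset (Fin m)) :
    MeasurableSet {ω | allocAux m τ θ N ω = A} := by
  induction N with
  | zero => simp [allocAux]
  | succ N ih =>
    have : {ω | allocAux m τ θ (N+1) ω = A} =
        ({ω | okk m τ θ N ω} ∩ {ω | cand m τ N ω = A}) ∪ ({ω | okk m τ θ N ω}ᶜ ∩ {ω | allocAux m τ θ N ω = A}) := by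
      ext ω
      by_cases h : okk m τ θ N ω <;> simp [allocAux, h]
    rw [this]
    exact ((meas_okk m τ θ N).inter (meas_cand m τ N A)).union ((meas_okk m τ θ N).compl.inter ih)

lemma alloc_spec (m τ : ℕ) (θ : ℝ) (N : ℕ) (ω) (h : ∃ n < N, okk m τ θ n ω) :
    ∃ n < N, okk m τ θ n ω ∧ allocAux m τ θ N ω = cand m τ n ω := by
  induction N with
  | zero => obtain ⟨n, hn, _⟩ := h; omega
  | succ N ih =>
    by_cases hN : okk m τ θ N ω
    · exact ⟨N, by omega, hN, by simp [allocAux, hN]⟩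
    · obtain ⟨n, hn, ho⟩ := h
      have hne : n ≠ N := fun e => hN (e ▸ ho)
      obtain ⟨n', h1, h2, h3⟩ := ih ⟨n, by omega, ho⟩
      exact ⟨n', by omega, h2, by simp [allocAux, hN, h3]⟩

lemma noise_true (m τ n : ℕ) (μa μb : Fin m → ℝ) (ω) :
    ∑ i, sgn m τ n ω i * nb τ true (fun j => ω (i, j)) =
      ((τ - τ/2 : ℕ) : ℝ) * fa m τ n μa ω + noise m τ n true μa μb ω := by
  unfold fa noise
  rw [Finset.mul_sum, ← Finset.sum_add_distrib]
  apply Finset.sum_congr rfl; intro i _; simp only [if_true]; ring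

lemma noise_false (m τ n : ℕ) (μa μb : Fin m → ℝ) (ω) :
    -∑ i, sgn m τ n ω i * nb τ false (fun j => ω (i, j)) =
      ((τ - τ/2 : ℕ) : ℝ) * fb m τ n μb ω - noise m τ n false μa μb ω := by
  unfold fb noise
  rw [mul_neg, Finset.mul_sum, ← neg_add', ← Finset.sum_add_distrib]
  congr 1
  apply Finset.sum_congr rfl; intro i _; simp only [Bool.false_eq_true, if_false]; ring

theorem core (m τ : ℕ) (μa μb : Fin m → ℝ) (Δ t b ε η E : ℝ) (hm : 0 < m)
    (ha : ∀ i, μa i ∈ Set.Icc (0:ℝ) 1) (hb' : ∀ i, μb i ∈ Set.Icc (0:ℝ) 1)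
    (hopt : optEnvy μa μb ≤ -Δ)
    (hτ : 0 < τ / 2) (ht0 : 0 ≤ t) (ht1 : t ≤ 1/8) (hb : 0 ≤ b)
    (hbR : 2 * b * √((τ/2 : ℕ) : ℝ) ≤ 1) (hη : 0 ≤ η) (hε : 2 * η + 6 ≤ ε)
    (hE1 : exp (t * ε - (t/8) * (√((τ/2 : ℕ) : ℝ) * (2 * (Δ - 2) * b - m * b^2)) + m * (t^2/((τ/2 : ℕ) : ℝ))) ≤ E)
    (hE2 : exp (-(((τ - τ/2 : ℕ) : ℝ) * η^2 / (2 * m))) ≤ E) :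
    1 - (m * m + 1) * (5 * E) ≤ (obsMeasure m τ 1 μa μb).real
      {ω | envy μa μb (allocAux m τ (((τ - τ/2 : ℕ) : ℝ) * η) (m*m+1) ω) ≤ 0} := by
  set P := obsMeasure m τ 1 μa μb with hP
  set T : ℝ := ((τ - τ/2 : ℕ) : ℝ) with hT
  have hTpos : 0 < T := by
    rw [hT]; exact_mod_cast (by omega : 0 < τ - τ/2)
  set bad : ℕ → Set (Fin m × Bool × Fin τ → ℝ) := fun n =>
    {ω | ∑ i, gl m μa μb (lev m n i) i * sgn m τ n ω i ≤ ε} ∪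
    ({ω | T * η ≤ |noise m τ n true μa μb ω|} ∪ {ω | T * η ≤ |noise m τ n false μa μb ω|}) with hbad
  have hbadP : ∀ n ∈ Finset.range (m*m+1), P.real (bad n) ≤ 5 * E := by
    intro n hn
    have hn' : n ≤ m * m := by simpa [Nat.lt_succ_iff] using hn
    have h1 := tail_gain m τ n μa μb t b (Δ - 2) ε hm ha hb' (lev_le m n hn')
      (gl_sum m n μa μb Δ hm hn' ha hb' hopt) hτ ht0 ht1 hb hbR
    have h2 := tail_noise m τ n true μa μb η hm hη
    have h3 := tail_noise m τ n false μa μb η hm hη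
    have u1 := measureReal_union_le (μ := P) {ω | ∑ i, gl m μa μb (lev m n i) i * sgn m τ n ω i ≤ ε}
      ({ω | T * η ≤ |noise m τ n true μa μb ω|} ∪ {ω | T * η ≤ |noise m τ n false μa μb ω|})
    have u2 := measureReal_union_le (μ := P) {ω | T * η ≤ |noise m τ n true μa μb ω|} {ω | T * η ≤ |noise m τ n false μa μb ω|}
    simp only [hbad]
    linarith
  have hU : P.real (⋃ n ∈ Finset.range (m*m+1), bad n) ≤ (m * m + 1) * (5 * E) := by
    refine (measureReal_biUnion_finset_le _ _).trans ?_
    refine (Finset.sum_le_sum hbadP).trans ?_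
    simp
  set good := {ω | envy μa μb (allocAux m τ (T * η) (m*m+1) ω) ≤ 0} with hgood
  have hsub : (⋃ n ∈ Finset.range (m*m+1), bad n)ᶜ ⊆ good := by
    intro ω hω
    simp only [Set.mem_compl_iff, Set.mem_iUnion, not_exists, Finset.mem_range, Nat.lt_succ_iff] at hω
    have hn : ∀ n ≤ m * m, ε ≤ ∑ i, gl m μa μb (lev m n i) i * sgn m τ n ω i ∧
        |noise m τ n true μa μb ω| < T * η ∧ |noise m τ n false μa μb ω| < T * η := by
      intro n hn
      have := hω n hn
      simp only [hbad, Set.mem_union, Set.mem_ofPred_eq, not_or, not_le] at this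
      exact ⟨this.1.le, this.2.1, this.2.2⟩
    obtain ⟨n, hnle, h1, h2⟩ := path_exists m τ μa μb ω ε hm ha hb' (fun n h => (hn n h).1)
    have hok : okk m τ (T * η) n ω := by
      obtain ⟨_, n1, n2⟩ := hn n hnle
      rw [abs_lt] at n1 n2
      unfold okk
      rw [noise_true m τ n μa μb, noise_false m τ n μa μb]
      have g1 : T * (2*η) ≤ T * fa m τ n μa ω := mul_le_mul_of_nonneg_left (by linarith) hTpos.le
      have g2 : T * (2*η) ≤ T * fb m τ n μb ω := mul_le_mul_of_nonneg_left (by linarith) hTpos.le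
      constructor <;> linarith [n1.1, n1.2, n2.1, n2.2]
    obtain ⟨n', hlt, hok', heq⟩ := alloc_spec m τ (T * η) (m*m+1) ω ⟨n, by omega, hok⟩
    rw [hgood, Set.mem_ofPred_eq, heq]
    obtain ⟨_, n1, n2⟩ := hn n' (by omega)
    rw [abs_lt] at n1 n2
    unfold okk at hok'
    rw [noise_true m τ n' μa μb, noise_false m τ n' μa μb] at hok'
    apply envy_cand
    · have : 0 ≤ T * fa m τ n' μa ω := by linarith [hok'.1, n1.2]
      exact nonneg_of_mul_nonneg_right this hTpos
    · have : 0 ≤ T * fb m τ n' μb ω := by linarith [hok'.2, n2.1]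
      exact nonneg_of_mul_nonneg_right this hTpos
  have h1 : (1:ℝ) ≤ P.real ((⋃ n ∈ Finset.range (m*m+1), bad n) ∪ good) := by
    have : (⋃ n ∈ Finset.range (m*m+1), bad n) ∪ good = Set.univ := by
      rw [Set.eq_univ_iff_forall]; intro ω
      by_cases h : ω ∈ (⋃ n ∈ Finset.range (m*m+1), bad n)
      · left; exact h
      · right; exact hsub h
    rw [this, probReal_univ]
  have h2 := measureReal_union_le (μ := P) (⋃ n ∈ Finset.range (m*m+1), bad n) good
  linarith

/-- numerical consequences of the choice of parameters -/
lemma params (s L D R W : ℝ) (hs : 0 < s) (hL : 20 ≤ L) (hLs : L ^ 2 ≤ s) (hD0 : 0 ≤ D)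
    (hD : s * L ^ 4 ≤ D ^ 2) (hDL : 2 * (L * D) ≤ s ^ 2)
    (hR1 : 5 * s ^ 3 * L ≤ R * D ^ 2)
    (hR2 : 2 * R * D ^ 2 ≤ 15 * s ^ 3 * L + (L ^ 2 + 1) * D ^ 2) (hR : 0 < R) (hRW : R ≤ W) :
    0 ≤ L / s * √R / 32 ∧ L / s * √R / 32 ≤ 1 / 8 ∧ 0 ≤ D / (2 * s ^ 2) ∧
    2 * (D / (2 * s ^ 2)) * √R ≤ 1 ∧ 0 ≤ √R * D ^ 2 / (512 * s ^ 2) ∧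
    2 * (√R * D ^ 2 / (512 * s ^ 2)) + 6 ≤ √R * D ^ 2 / (64 * s ^ 2) ∧
    L / s * √R / 32 * (√R * D ^ 2 / (64 * s ^ 2)) - (L / s * √R / 32 / 8) *
      (√R * (2 * (D - 2) * (D / (2 * s ^ 2)) - s ^ 2 * (D / (2 * s ^ 2)) ^ 2))
      + s ^ 2 * ((L / s * √R / 32) ^ 2 / R) ≤ -(1 / 40000) * L ^ 2 ∧
    -(W * (√R * D ^ 2 / (512 * s ^ 2)) ^ 2 / (2 * s ^ 2)) ≤ -(1 / 40000) * L ^ 2 := by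
  have hs1 : 400 ≤ s := by nlinarith
  have hL0 : 0 < L := by linarith
  have hL4 : (1:ℝ) ≤ L ^ 4 := one_le_pow₀ (by linarith)
  have hDD : 16 ≤ D ^ 2 := by nlinarith
  have hD4 : 4 ≤ D := by nlinarith
  have hDp : 0 < D := by linarith
  have hr : 0 < √R := Real.sqrt_pos.mpr hR
  have hrr : √R ^ 2 = R := Real.sq_sqrt hR.le
  set r := √R with hrdef
  have hB : r * D ≤ s ^ 2 := by
    apply abs_le_of_sq_le_sq' _ (by positivity) |>.2
    have h1 : 15 * s ^ 3 * L ≤ s ^ 4 := by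
      have : 15 * L ≤ s := by nlinarith
      have h3 : 0 < s ^ 3 := by positivity
      nlinarith
    have h2 : (L ^ 2 + 1) * D ^ 2 ≤ s ^ 4 := by
      have h4 : (2 * (L * D)) ^ 2 ≤ (s ^ 2) ^ 2 := pow_le_pow_left₀ (by positivity) hDL 2
      nlinarith [sq_nonneg D]
    rw [mul_pow, hrr]; nlinarith
  have hC : L * r ≤ 4 * s := by
    apply abs_le_of_sq_le_sq' _ (by positivity) |>.2
    rw [mul_pow, hrr]
    have h1 : s ^ 3 * L ^ 3 ≤ s ^ 2 * D ^ 2 := by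
      have : L ^ 3 ≤ L ^ 4 := pow_le_pow_right₀ (by linarith) (by norm_num)
      calc s ^ 3 * L ^ 3 ≤ s ^ 3 * L ^ 4 := by gcongr
        _ = s ^ 2 * (s * L ^ 4) := by ring
        _ ≤ _ := by gcongr
    have h2 : L ^ 2 * (L ^ 2 + 1) ≤ 2 * s ^ 2 := by nlinarith
    have h3 : L ^ 2 * (2 * R * D ^ 2) ≤ L ^ 2 * (15 * s ^ 3 * L + (L ^ 2 + 1) * D ^ 2) := by gcongr
    have h4 : L ^ 2 * (L ^ 2 + 1) * D ^ 2 ≤ 2 * s ^ 2 * D ^ 2 := by gcongr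
    have h5 : (L ^ 2 * R) * D ^ 2 ≤ ((4 * s) ^ 2) * D ^ 2 := by nlinarith [sq_nonneg (s * D)]
    exact le_of_mul_le_mul_right h5 (by positivity)
  have hF : 768 * s ^ 2 ≤ r * D ^ 2 := by
    apply abs_le_of_sq_le_sq' _ (by positivity) |>.2
    have h1 : 5 * s ^ 3 * L * D ^ 2 ≤ R * D ^ 2 * D ^ 2 := by gcongr
    have h2 : 5 * s ^ 3 * L * (s * L ^ 4) ≤ 5 * s ^ 3 * L * D ^ 2 := by gcongr
    have h3 : (20:ℝ) ^ 5 ≤ L ^ 5 := pow_le_pow_left₀ (by norm_num) hL 5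
    have h4 : s ^ 4 * (20:ℝ) ^ 5 ≤ s ^ 4 * L ^ 5 := by gcongr
    have h5 : 0 < s ^ 4 := by positivity
    rw [mul_pow r, hrr]; nlinarith
  refine ⟨by positivity, ?_, by positivity, ?_, by positivity, ?_, ?_, ?_⟩
  · rw [div_mul_eq_mul_div, div_div, div_le_div_iff₀ (by positivity) (by norm_num)]; linarith
  · have : 2 * (D / (2 * s ^ 2)) * r = r * D / s ^ 2 := by field_simp
    rw [this, div_le_one (by positivity)]; exact hB
  · have h1 : r * D ^ 2 / (64 * s ^ 2) = 8 * (r * D ^ 2 / (512 * s ^ 2)) := by field_simp; norm_num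
    have h2 : 1 ≤ r * D ^ 2 / (512 * s ^ 2) := by
      rw [le_div_iff₀ (by positivity)]; nlinarith
    linarith
  · have e1 : D * (D / (2 * s ^ 2)) ≤ 2 * (D - 2) * (D / (2 * s ^ 2)) := by
      have : 0 ≤ D / (2 * s ^ 2) := by positivity
      nlinarith
    have e2 : D * (D / (2 * s ^ 2)) - s ^ 2 * (D / (2 * s ^ 2)) ^ 2 = D ^ 2 / (4 * s ^ 2) := by
      field_simp; norm_num
    have e3 : (L / s * r / 32 / 8) * (r * (D ^ 2 / (4 * s ^ 2))) ≤ (L / s * r / 32 / 8) *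
      (r * (2 * (D - 2) * (D / (2 * s ^ 2)) - s ^ 2 * (D / (2 * s ^ 2)) ^ 2)) := by
      apply mul_le_mul_of_nonneg_left _ (by positivity)
      apply mul_le_mul_of_nonneg_left _ hr.le
      linarith
    have e4 : s ^ 2 * ((L / s * r / 32) ^ 2 / R) = L ^ 2 / 1024 := by
      rw [← hrr]; field_simp; norm_num
    have e5 : L / s * r / 32 * (r * D ^ 2 / (64 * s ^ 2)) = L * (R * D ^ 2) / (2048 * s ^ 3) := by
      rw [← hrr]; field_simp; norm_num
    have e6 : (L / s * r / 32 / 8) * (r * (D ^ 2 / (4 * s ^ 2))) = 2 * (L * (R * D ^ 2) / (2048 * s ^ 3)) := by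
      rw [← hrr]; field_simp; norm_num
    have e7 : 5 * L ^ 2 / 2048 ≤ L * (R * D ^ 2) / (2048 * s ^ 3) := by
      rw [div_le_div_iff₀ (by norm_num) (by positivity)]
      have : L * (5 * s ^ 3 * L) ≤ L * (R * D ^ 2) := by gcongr
      linarith
    have : 0 ≤ L ^ 2 := by positivity
    linarith
  · have e1 : R * (r * D ^ 2 / (512 * s ^ 2)) ^ 2 / (2 * s ^ 2) ≤ W * (r * D ^ 2 / (512 * s ^ 2)) ^ 2 / (2 * s ^ 2) := by
      gcongr
    have e2 : R * (r * D ^ 2 / (512 * s ^ 2)) ^ 2 / (2 * s ^ 2) = (R * D ^ 2) ^ 2 / (524288 * s ^ 6) := by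
      rw [div_pow, mul_pow r, hrr]; field_simp; norm_num
    have e3 : (5 * s ^ 3 * L) ^ 2 ≤ (R * D ^ 2) ^ 2 := by gcongr
    have e4 : 1 / 40000 * L ^ 2 ≤ (R * D ^ 2) ^ 2 / (524288 * s ^ 6) := by
      rw [le_div_iff₀ (by positivity)]
      have : 0 ≤ s ^ 6 * L ^ 2 := by positivity
      nlinarith
    linarith

lemma ev_facts (Δ : ℕ → ℝ)
    (hΔ1 : ∀ᶠ m : ℕ in atTop, (m : ℝ) ^ ((1 : ℝ) / 4) * Real.log m ^ 2 ≤ Δ m)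
    (hΔ2 : Tendsto (fun m : ℕ => Δ m * Real.log m / m) atTop (nhds 0)) :
    ∀ᶠ m : ℕ in atTop, 0 < m ∧ 20 ≤ Real.log m ∧ Real.log m ^ 2 ≤ √(m:ℝ) ∧ 0 ≤ Δ m ∧
      √(m:ℝ) * Real.log m ^ 4 ≤ Δ m ^ 2 ∧ 2 * (Real.log m * Δ m) ≤ √(m:ℝ) ^ 2 := by
  have hc : Tendsto (fun m : ℕ => (m:ℝ)) atTop atTop := tendsto_natCast_atTop_atTop
  have h1 : ∀ᶠ m : ℕ in atTop, 20 ≤ Real.log m :=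
    (Real.tendsto_log_atTop.comp hc).eventually_ge_atTop 20
  have h2 : ∀ᶠ m : ℕ in atTop, Real.log m ^ 2 ≤ √(m:ℝ) := by
    have := (isLittleO_log_rpow_rpow_atTop (s := 1/2) 2 (by norm_num)).bound (c := 1) one_pos
    filter_upwards [hc.eventually this, h1] with m hm h1
    rw [Real.norm_of_nonneg (by positivity), Real.norm_of_nonneg (by positivity), one_mul] at hm
    rw [Real.sqrt_eq_rpow]
    exact_mod_cast hm
  have h3 := hΔ2.eventually_lt_const (show (0:ℝ) < 1/2 by norm_num)
  filter_upwards [h1, h2, h3, hΔ1, eventually_gt_atTop 0] with m h1 h2 h3 h4 h5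
  have hm : (0:ℝ) < m := by exact_mod_cast h5
  have h6 : 0 ≤ (m : ℝ) ^ ((1 : ℝ) / 4) * Real.log m ^ 2 := by positivity
  refine ⟨h5, h1, h2, h6.trans h4, ?_, ?_⟩
  · have := pow_le_pow_left₀ h6 h4 2
    have e : √(m:ℝ) * Real.log m ^ 4 = ((m : ℝ) ^ ((1 : ℝ) / 4) * Real.log m ^ 2) ^ 2 := by
      rw [mul_pow, ← pow_mul, Real.sqrt_eq_rpow, ← Real.rpow_natCast ((m:ℝ) ^ _), ← Real.rpow_mul hm.le]
      norm_num
    rw [e]; exact this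
  · rw [Real.sq_sqrt hm.le]
    rw [div_lt_iff₀ hm] at h3
    linarith

lemma tau_facts (m τ : ℕ) (D : ℝ) (hm : 0 < m) (hL : 20 ≤ Real.log m) (hD : 0 < D)
    (hτ : τ = ⌈15 * ((m : ℝ) ^ ((3 : ℝ) / 2) / D ^ 2) * Real.log m + Real.log m ^ 2⌉₊) :
    0 < τ / 2 ∧ 5 * √(m:ℝ) ^ 3 * Real.log m ≤ ((τ/2:ℕ):ℝ) * D ^ 2 ∧
    2 * ((τ/2:ℕ):ℝ) * D ^ 2 ≤ 15 * √(m:ℝ) ^ 3 * Real.log m + (Real.log m ^ 2 + 1) * D ^ 2 ∧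
    ((τ/2:ℕ):ℝ) ≤ ((τ - τ/2:ℕ):ℝ) := by
  have hm' : (0:ℝ) < m := by exact_mod_cast hm
  have e : (m : ℝ) ^ ((3 : ℝ) / 2) = √(m:ℝ) ^ 3 := by
    rw [Real.sqrt_eq_rpow, ← Real.rpow_natCast ((m:ℝ) ^ _), ← Real.rpow_mul hm'.le]; norm_num
  rw [e] at hτ
  set L := Real.log m
  set s := √(m:ℝ)
  have hs : 0 < s := Real.sqrt_pos.mpr hm'
  have hL0 : 0 < L := by linarith
  set X := 15 * (s ^ 3 / D ^ 2) * L with hX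
  have hX0 : 0 ≤ X := by positivity
  have hXD : X * D ^ 2 = 15 * s ^ 3 * L := by rw [hX]; field_simp
  have g1 : X + L ^ 2 ≤ τ := by rw [hτ]; exact Nat.le_ceil _
  have g2 : (τ:ℝ) < X + L ^ 2 + 1 := by rw [hτ]; exact Nat.ceil_lt_add_one (by positivity)
  have g3 : 3 ≤ τ := by
    have : (3:ℝ) ≤ τ := by nlinarith
    exact_mod_cast this
  have g4 : (τ:ℝ) ≤ 3 * ((τ/2:ℕ):ℝ) := by
    have : τ ≤ 3 * (τ/2) := by omega
    exact_mod_cast this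
  have g5 : 2 * ((τ/2:ℕ):ℝ) ≤ τ := by
    have : 2 * (τ/2) ≤ τ := by omega
    exact_mod_cast this
  have hD2 : 0 < D ^ 2 := by positivity
  refine ⟨by omega, ?_, ?_, by exact_mod_cast (by omega : τ/2 ≤ τ - τ/2)⟩
  · have : X * D ^ 2 ≤ 3 * ((τ/2:ℕ):ℝ) * D ^ 2 := by
      apply mul_le_mul_of_nonneg_right _ hD2.le
      nlinarith
    linarith
  · have : 2 * ((τ/2:ℕ):ℝ) * D ^ 2 ≤ (X + L ^ 2 + 1) * D ^ 2 := by
      apply mul_le_mul_of_nonneg_right _ hD2.le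
      linarith
    linarith

lemma tail_lim : Tendsto (fun m : ℕ => 1 - ((m:ℝ) * m + 1) * (5 * exp (-(1 / 40000) * Real.log m ^ 2)))
    atTop (nhds 1) := by
  have hc : Tendsto (fun m : ℕ => (m:ℝ)) atTop atTop := tendsto_natCast_atTop_atTop
  have hl := Real.tendsto_log_atTop.comp hc
  have h0 : Tendsto (fun m : ℕ => 10 * (m:ℝ)⁻¹) atTop (nhds 0) := by
    simpa using (tendsto_inv_atTop_zero.comp hc).const_mul (10:ℝ)
  have h1 : Tendsto (fun m : ℕ => ((m:ℝ) * m + 1) * (5 * exp (-(1 / 40000) * Real.log m ^ 2)))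
      atTop (nhds 0) := by
    apply squeeze_zero' (Eventually.of_forall fun m => by positivity) _ h0
    filter_upwards [hl.eventually_ge_atTop 120000, eventually_gt_atTop 0] with m hL hm
    simp only [Function.comp] at hL
    have hm' : (1:ℝ) ≤ m := by exact_mod_cast hm
    have e1 : exp (-(1 / 40000) * Real.log m ^ 2) ≤ exp (-(3 * Real.log m)) := by
      apply exp_le_exp.mpr; nlinarith
    have e2 : exp (-(3 * Real.log m)) = ((m:ℝ) ^ 3)⁻¹ := by
      rw [Real.exp_neg]
      congr 1
      rw [show 3 * Real.log m = ((3:ℕ):ℝ) * Real.log m by norm_num, Real.exp_nat_mul, Real.exp_log (by linarith)]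
    rw [e2] at e1
    calc ((m:ℝ) * m + 1) * (5 * exp (-(1 / 40000) * Real.log m ^ 2))
        ≤ (2 * (m:ℝ) ^ 2) * (5 * ((m:ℝ) ^ 3)⁻¹) := by
          gcongr; nlinarith
      _ = 10 * (m:ℝ)⁻¹ := by field_simp; norm_num
  simpa using h1.const_sub 1

lemma profile_exists (m : ℕ) (D : ℝ) (hm : 2 ≤ m) (hD : 4 * D ≤ m) :
    ∃ p : (Fin m → ℝ) × (Fin m → ℝ), (∀ i, p.1 i ∈ Set.Icc (0 : ℝ) 1) ∧
      (∀ i, p.2 i ∈ Set.Icc (0 : ℝ) 1) ∧ optEnvy p.1 p.2 ≤ -D := by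
  obtain ⟨A, -, hA⟩ := Finset.exists_subset_card_eq
    (s := (Finset.univ : Finset (Fin m))) (n := m / 2) (by simp; omega)
  have hAc : (Aᶜ).card = m - m / 2 := by rw [Finset.card_compl, hA]; simp
  refine ⟨(fun i => if i ∈ A then 1 else 0, fun i => if i ∈ A then 0 else 1), ?_, ?_, ?_⟩
  · intro i; by_cases h : i ∈ A <;> simp [h]
  · intro i; by_cases h : i ∈ A <;> simp [h]
  · refine (ciInf_le (Set.finite_range _).bddBelow A).trans ?_
    have h1 : ∑ i ∈ A, (if i ∈ A then (1:ℝ) else 0) = (m / 2 : ℕ) := by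
      rw [← hA, Finset.sum_congr rfl (g := fun _ => (1:ℝ)) (fun i hi => by simp [hi])]; simp
    have h2 : ∑ i ∈ Aᶜ, (if i ∈ A then (1:ℝ) else 0) = 0 :=
      Finset.sum_eq_zero (fun i hi => by rw [Finset.mem_compl] at hi; simp [hi])
    have h3 : ∑ i ∈ A, (if i ∈ A then (0:ℝ) else 1) = 0 :=
      Finset.sum_eq_zero (fun i hi => by simp [hi])
    have h4 : ∑ i ∈ Aᶜ, (if i ∈ A then (0:ℝ) else 1) = (m - m / 2 : ℕ) := by
      rw [← hAc, Finset.sum_congr rfl (g := fun _ => (1:ℝ))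
        (fun i hi => by rw [Finset.mem_compl] at hi; simp [hi])]; simp
    have h5 : (m:ℝ) ≤ 4 * ((m/2:ℕ):ℝ) := by exact_mod_cast (by omega : m ≤ 4 * (m/2))
    have h6 : (m:ℝ) ≤ 4 * ((m - m/2:ℕ):ℝ) := by exact_mod_cast (by omega : m ≤ 4 * (m - m/2))
    simp only [envy, envyAB, envyBA, h1, h2, h3, h4]
    apply max_le <;> linarith

lemma main_bound (Δ : ℕ → ℝ)
    (hΔ1 : ∀ᶠ m : ℕ in atTop, (m : ℝ) ^ ((1 : ℝ) / 4) * Real.log m ^ 2 ≤ Δ m)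
    (hΔ2 : Tendsto (fun m : ℕ => Δ m * Real.log m / m) atTop (nhds 0))
    (τ : ℕ → ℕ)
    (hτ : ∀ m : ℕ,
      τ m = ⌈15 * ((m : ℝ) ^ ((3 : ℝ) / 2) / Δ m ^ 2) * Real.log m + Real.log m ^ 2⌉₊) :
    ∃ θ : ℕ → ℝ, ∀ᶠ m : ℕ in atTop, 2 ≤ m ∧ 4 * Δ m ≤ m ∧
      ∀ μa μb : Fin m → ℝ, (∀ i, μa i ∈ Set.Icc (0 : ℝ) 1) → (∀ i, μb i ∈ Set.Icc (0 : ℝ) 1) →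
        optEnvy μa μb ≤ -Δ m →
        1 - ((m:ℝ) * m + 1) * (5 * exp (-(1 / 40000) * Real.log m ^ 2)) ≤
          (obsMeasure m (τ m) 1 μa μb).real
            {ω | envy μa μb (allocAux m (τ m) (θ m) (m * m + 1) ω) ≤ 0} := by
  refine ⟨fun m => ((τ m - τ m / 2 : ℕ):ℝ) *
    (√((τ m / 2 : ℕ):ℝ) * Δ m ^ 2 / (512 * √(m:ℝ) ^ 2)), ?_⟩
  filter_upwards [ev_facts Δ hΔ1 hΔ2, eventually_ge_atTop 2] with m ⟨hm, hL, hLs, hD0, hD, hDL⟩ hm2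
  have hm' : (0:ℝ) < m := by exact_mod_cast hm
  have hs : 0 < √(m:ℝ) := Real.sqrt_pos.mpr hm'
  have hDp : 0 < Δ m := by
    rcases hD0.lt_or_eq with h | h
    · exact h
    · rw [← h] at hD
      have : 0 < √(m:ℝ) * Real.log m ^ 4 := by positivity
      norm_num at hD; linarith
  obtain ⟨t0, t1, t2, t3⟩ := tau_facts m (τ m) (Δ m) hm hL hDp (hτ m)
  have hR : (0:ℝ) < ((τ m / 2 : ℕ):ℝ) := by exact_mod_cast t0
  obtain ⟨p1, p2, p3, p4, p5, p6, p7, p8⟩ := params (√(m:ℝ)) (Real.log m) (Δ m) ((τ m / 2 : ℕ):ℝ)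
    ((τ m - τ m / 2 : ℕ):ℝ) hs hL hLs hD0 hD hDL t1 t2 hR t3
  have hsq : √(m:ℝ) ^ 2 = m := Real.sq_sqrt hm'.le
  refine ⟨hm2, ?_, ?_⟩
  · rw [hsq] at hDL; nlinarith
  intro μa μb ha hb hopt
  refine core m (τ m) μa μb (Δ m) (Real.log m / √(m:ℝ) * √((τ m / 2 : ℕ):ℝ) / 32)
    (Δ m / (2 * √(m:ℝ) ^ 2)) (√((τ m / 2 : ℕ):ℝ) * Δ m ^ 2 / (64 * √(m:ℝ) ^ 2))
    (√((τ m / 2 : ℕ):ℝ) * Δ m ^ 2 / (512 * √(m:ℝ) ^ 2)) _ hm ha hb hopt t0 p1 p2 p3 p4 p5 p6 ?_ ?_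
  · apply exp_le_exp.mpr
    refine le_of_eq_of_le ?_ p7
    rw [hsq]
  · apply exp_le_exp.mpr
    refine le_of_eq_of_le ?_ p8
    rw [hsq]

/-- with unit-variance noise, `q(m) = m ⌈15 (m^{3/2}/Δ(m)²) log m + (log m)²⌉`
queries (i.e. `τ(m) = q(m)/m` samples per item and agent) suffice: there is a measurable
allocation rule whose worst-case (over profiles with `OptEnvy ≤ -Δ(m)`) probability of
outputting an envy-free allocation tends to `1`. -/
theorem stmt1 (Δ : ℕ → ℝ)
    (hΔ1 : ∀ᶠ m : ℕ in atTop, (m : ℝ) ^ ((1 : ℝ) / 4) * Real.log m ^ 2 ≤ Δ m)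
    (hΔ2 : Tendsto (fun m : ℕ => Δ m * Real.log m / m) atTop (nhds 0))
    (τ : ℕ → ℕ)
    (hτ : ∀ m : ℕ,
      τ m = ⌈15 * ((m : ℝ) ^ ((3 : ℝ) / 2) / Δ m ^ 2) * Real.log m + Real.log m ^ 2⌉₊) :
    ∃ alloc : (m : ℕ) → ((Fin m × Bool × Fin (τ m)) → ℝ) → Finset (Fin m),
      (∀ m (A : Finset (Fin m)), MeasurableSet {ω | alloc m ω = A}) ∧
      Tendsto (fun m : ℕ =>
          ⨅ p : {p : (Fin m → ℝ) × (Fin m → ℝ) //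
              (∀ i, p.1 i ∈ Set.Icc (0 : ℝ) 1) ∧ (∀ i, p.2 i ∈ Set.Icc (0 : ℝ) 1) ∧
              optEnvy p.1 p.2 ≤ -Δ m},
            (obsMeasure m (τ m) 1 p.val.1 p.val.2
                {ω | envy p.val.1 p.val.2 (alloc m ω) ≤ 0}).toReal)
        atTop (nhds 1) := by
  obtain ⟨θ, hθ⟩ := main_bound Δ hΔ1 hΔ2 τ hτ
  refine ⟨fun m => allocAux m (τ m) (θ m) (m * m + 1), fun m A => meas_alloc m (τ m) (θ m) _ A, ?_⟩
  refine tendsto_of_tendsto_of_tendsto_of_le_of_le' tail_lim tendsto_const_nhds ?_ ?_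
  · filter_upwards [hθ] with m ⟨hm2, hD, h⟩
    obtain ⟨p, hp⟩ := profile_exists m (Δ m) hm2 hD
    have : Nonempty {p : (Fin m → ℝ) × (Fin m → ℝ) //
              (∀ i, p.1 i ∈ Set.Icc (0 : ℝ) 1) ∧ (∀ i, p.2 i ∈ Set.Icc (0 : ℝ) 1) ∧
              optEnvy p.1 p.2 ≤ -Δ m} := ⟨⟨p, hp⟩⟩
    exact le_ciInf (fun q => h q.val.1 q.val.2 q.property.1 q.property.2.1 q.property.2.2)
  · filter_upwards [hθ] with m ⟨hm2, hD, _⟩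
    obtain ⟨p, hp⟩ := profile_exists m (Δ m) hm2 hD
    refine (ciInf_le ⟨0, ?_⟩ ⟨p, hp⟩).trans ?_
    · rintro _ ⟨q, rfl⟩
      exact ENNReal.toReal_nonneg
    · have : IsProbabilityMeasure (obsMeasure m (τ m) 1 p.1 p.2) := by
        unfold obsMeasure; infer_instance
      exact measureReal_le_one
end
end

section
/- Let μ^a, μ^b ∈ [0,1]^m be utility profiles and Δ > 0 satisfy OptEnvy ≤ −Δ. Then for every real c > 0, it holds that ∑_{i=1}^m |c μ^a_i − μ^b_i| ≥ (1+c)Δ. -/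
open scoped Classical

noncomputable section

/-- if `OptEnvy ≤ -Δ` then `∑ i |c μ^a_i − μ^b_i| ≥ (1+c) Δ` for all `c > 0`. -/
theorem stmt4 {m : ℕ} (μa μb : Fin m → ℝ)
    (hμa : ∀ i, μa i ∈ Set.Icc (0 : ℝ) 1) (hμb : ∀ i, μb i ∈ Set.Icc (0 : ℝ) 1)
    (Δ : ℝ) (hΔ : 0 < Δ) (hopt : optEnvy μa μb ≤ -Δ) (c : ℝ) (hc : 0 < c) :
    (1 + c) * Δ ≤ ∑ i, |c * μa i - μb i| := by
  obtain ⟨A, hA⟩ := exists_eq_ciInf_of_finite (f := fun A : Finset (Fin m) => envy μa μb A)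
  have hA' : envy μa μb A ≤ -Δ := le_trans (le_of_eq hA) hopt
  have h1 : envyAB μa A ≤ -Δ := le_trans (le_max_left _ _) hA'
  have h2 : envyBA μb A ≤ -Δ := le_trans (le_max_right _ _) hA'
  unfold envyAB at h1
  unfold envyBA at h2
  have h3 := mul_le_mul_of_nonneg_left h1 hc.le
  have e1 : ∑ i ∈ A, (c * μa i - μb i) ≤ ∑ i ∈ A, |c * μa i - μb i| :=
    Finset.sum_le_sum fun i _ => le_abs_self _
  have e2 : ∑ i ∈ Aᶜ, -(c * μa i - μb i) ≤ ∑ i ∈ Aᶜ, |c * μa i - μb i| :=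
    Finset.sum_le_sum fun i _ => neg_le_abs _
  rw [Finset.sum_sub_distrib, ← Finset.mul_sum] at e1
  rw [Finset.sum_neg_distrib, Finset.sum_sub_distrib, ← Finset.mul_sum] at e2
  rw [← Finset.sum_add_sum_compl A]
  linarith
end
end

section
/- Let μ^a, μ^b ∈ [0,1]^m with OptEnvy ≤ −Δ for some Δ > 0, let q ≥ 1 satisfy q ≤ (1/2) m³/Δ², and for c > 0 define z_i(c) = √(q/(m(1+c²))) · (c μ^a_i − μ^b_i). Then for all c > 0: ∑_{i=1}^m (1 − 2Q(z_i(c))) · z_i(c) ≥ 0.21 · (q/m²) · ((1+c)²/(1+c²)) · Δ². -/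
open MeasureTheory Real
open scoped Classical

noncomputable section

/-- The standard Gaussian upper-tail function `Q(z) = (1/√(2π)) ∫_z^∞ e^{−x²/2} dx`. -/
def gaussQ (z : ℝ) : ℝ := (1 / Real.sqrt (2 * Real.pi)) * ∫ x in Set.Ioi z, Real.exp (-x ^ 2 / 2)

lemma gauss_integrable : Integrable (fun x : ℝ => Real.exp (-x ^ 2 / 2)) := by
  have h := integrable_exp_neg_mul_sq (b := 1 / 2) (by norm_num)
  refine h.congr (Filter.Eventually.of_forall fun x => ?_)
  simp only
  congr 1
  ring

lemma one_sub_gaussQ (z : ℝ) : 1 - 2 * gaussQ z =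
    2 / Real.sqrt (2 * Real.pi) * ∫ x in (0 : ℝ)..z, Real.exp (-x ^ 2 / 2) := by
  have h0 : ∫ x in Set.Ioi (0 : ℝ), Real.exp (-x ^ 2 / 2) = Real.sqrt (2 * Real.pi) / 2 := by
    have h := integral_gaussian_Ioi (1 / 2)
    rw [show Real.pi / (1 / 2) = 2 * Real.pi by ring] at h
    rw [← h]
    congr 1
    funext x
    congr 1
    ring
  have h1 := intervalIntegral.integral_interval_add_Ioi (a := (0 : ℝ)) (b := z)
    gauss_integrable.integrableOn gauss_integrable.integrableOn
  have hs : 0 < Real.sqrt (2 * Real.pi) := Real.sqrt_pos.mpr (by positivity)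
  unfold gaussQ
  rw [h0] at h1
  have h2 : ∫ x in Set.Ioi z, Real.exp (-x ^ 2 / 2) =
    Real.sqrt (2 * Real.pi) / 2 - ∫ x in (0 : ℝ)..z, Real.exp (-x ^ 2 / 2) := by linarith
  rw [h2]
  field_simp
  ring

lemma one_sub_gaussQ_neg (z : ℝ) : 1 - 2 * gaussQ (-z) = -(1 - 2 * gaussQ z) := by
  rw [one_sub_gaussQ, one_sub_gaussQ]
  have h := intervalIntegral.integral_comp_neg (a := 0) (b := z)
    (fun x : ℝ => Real.exp (-x ^ 2 / 2))
  simp only [neg_sq, neg_zero] at h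
  rw [h, intervalIntegral.integral_symm (-z) 0]
  ring

lemma exp_bound {x : ℝ} (h0 : 0 ≤ x) (h1 : x ≤ 1) : 0.6 ≤ Real.exp (-x ^ 2 / 2) := by
  have h2 : Real.exp (-(1 / 2)) ≤ Real.exp (-x ^ 2 / 2) := by
    apply Real.exp_le_exp.mpr
    nlinarith
  have h3 : Real.exp (-(1 / 2)) * Real.exp (-(1 / 2)) * Real.exp 1 = 1 := by
    rw [← Real.exp_add, ← Real.exp_add]
    norm_num
  have h4 := Real.exp_one_lt_d9
  have h5 := Real.exp_pos (-(1 / 2))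
  by_contra! h
  have h6 : Real.exp (-(1 / 2)) < 0.6 := by linarith
  have h7 : Real.exp (-(1 / 2)) * Real.exp (-(1 / 2)) < 0.36 := by nlinarith
  nlinarith [Real.exp_pos 1]

lemma coef_bound : 0.7 ≤ 2 / Real.sqrt (2 * Real.pi) := by
  have hs : 0 < Real.sqrt (2 * Real.pi) := Real.sqrt_pos.mpr (by positivity)
  rw [le_div_iff₀ hs]
  have : Real.sqrt (2 * Real.pi) ≤ 2.6 := by
    rw [Real.sqrt_le_left (by norm_num)]
    nlinarith [Real.pi_lt_d2]
  linarith

lemma G_small {z : ℝ} (h0 : 0 ≤ z) (h1 : z ≤ 1) : 0.42 * z ≤ 1 - 2 * gaussQ z := by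
  rw [one_sub_gaussQ]
  have h : ∫ x in (0 : ℝ)..z, (0.6 : ℝ) ≤ ∫ x in (0 : ℝ)..z, Real.exp (-x ^ 2 / 2) := by
    apply intervalIntegral.integral_mono_on h0 (by simp) gauss_integrable.intervalIntegrable
    intro x hx
    exact exp_bound hx.1 (hx.2.trans h1)
  rw [intervalIntegral.integral_const, smul_eq_mul, sub_zero] at h
  have := coef_bound
  nlinarith

lemma G_large {z : ℝ} (h1 : 1 ≤ z) : 0.42 ≤ 1 - 2 * gaussQ z := by
  have h := G_small (z := 1) (by norm_num) le_rfl
  refine le_trans (by linarith) (h.trans ?_)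
  rw [one_sub_gaussQ, one_sub_gaussQ]
  refine mul_le_mul_of_nonneg_left ?_ (by positivity)
  apply intervalIntegral.integral_mono_interval le_rfl (by norm_num) h1
  · exact Filter.Eventually.of_forall fun x => (Real.exp_pos _).le
  · exact gauss_integrable.intervalIntegrable

lemma F_nonneg_bound {z t : ℝ} (hz : 0 ≤ z) (ht1 : t ≤ 1) :
    0.21 * (2 * t * z - t ^ 2) ≤ (1 - 2 * gaussQ z) * z := by
  rcases le_total z 1 with h | h
  · nlinarith [mul_le_mul_of_nonneg_right (G_small hz h) hz, sq_nonneg (z - t), sq_nonneg z]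
  · nlinarith [mul_le_mul_of_nonneg_right (G_large h) hz, sq_nonneg t,
      mul_le_mul_of_nonneg_right ht1 hz]

lemma F_bound (z : ℝ) {t : ℝ} (ht1 : t ≤ 1) :
    0.21 * (2 * t * |z| - t ^ 2) ≤ (1 - 2 * gaussQ z) * z := by
  rcases le_total 0 z with h | h
  · rw [abs_of_nonneg h]
    exact F_nonneg_bound h ht1
  · rw [abs_of_nonpos h]
    have := F_nonneg_bound (z := -z) (by linarith) ht1
    rw [one_sub_gaussQ_neg] at this
    linarith

lemma sum_abs_bound {m : ℕ} (μa μb : Fin m → ℝ) (Δ : ℝ) (hopt : optEnvy μa μb ≤ -Δ)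
    (c : ℝ) (hc : 0 < c) : (1 + c) * Δ ≤ ∑ i, |c * μa i - μb i| := by
  obtain ⟨A, hA⟩ := exists_eq_ciInf_of_finite (f := fun A : Finset (Fin m) => envy μa μb A)
  have hA' : envy μa μb A ≤ -Δ := by
    have : envy μa μb A = optEnvy μa μb := hA
    linarith
  obtain ⟨h1, h2⟩ := max_le_iff.mp hA'
  unfold envyAB at h1
  unfold envyBA at h2
  have h3 : ∑ i ∈ A, (c * μa i - μb i) ≤ ∑ i ∈ A, |c * μa i - μb i| :=
    Finset.sum_le_sum fun i _ => le_abs_self _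
  have h4 : ∑ i ∈ Aᶜ, -(c * μa i - μb i) ≤ ∑ i ∈ Aᶜ, |c * μa i - μb i| :=
    Finset.sum_le_sum fun i _ => neg_le_abs _
  rw [← Finset.sum_add_sum_compl A]
  rw [Finset.sum_sub_distrib, ← Finset.mul_sum] at h3
  rw [Finset.sum_neg_distrib, Finset.sum_sub_distrib, ← Finset.mul_sum] at h4
  nlinarith [mul_le_mul_of_nonneg_left h1 hc.le]

/-- with `z_i(c) = √(q/(m(1+c²))) (c μ^a_i − μ^b_i)`, if `OptEnvy ≤ -Δ` and
`q ≤ (1/2) m³/Δ²` then `∑ i (1 − 2Q(z_i(c))) z_i(c) ≥ 0.21 (q/m²) ((1+c)²/(1+c²)) Δ²`. -/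
theorem stmt6 {m : ℕ} (μa μb : Fin m → ℝ)
    (hμa : ∀ i, μa i ∈ Set.Icc (0 : ℝ) 1) (hμb : ∀ i, μb i ∈ Set.Icc (0 : ℝ) 1)
    (Δ : ℝ) (hΔ : 0 < Δ) (hopt : optEnvy μa μb ≤ -Δ)
    (q : ℕ) (hq1 : 1 ≤ q) (hq2 : (q : ℝ) ≤ 1 / 2 * m ^ 3 / Δ ^ 2)
    (c : ℝ) (hc : 0 < c) :
    0.21 * ((q : ℝ) / m ^ 2) * ((1 + c) ^ 2 / (1 + c ^ 2)) * Δ ^ 2 ≤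
      ∑ i, (1 - 2 * gaussQ (Real.sqrt ((q : ℝ) / (m * (1 + c ^ 2))) * (c * μa i - μb i))) *
        (Real.sqrt ((q : ℝ) / (m * (1 + c ^ 2))) * (c * μa i - μb i)) := by
  have hm : 0 < (m : ℝ) := by
    rcases Nat.eq_zero_or_pos m with h | h
    · subst h
      have : (1 : ℝ) ≤ q := by exact_mod_cast hq1
      norm_num at hq2
      linarith
    · exact_mod_cast h
  have hq0 : (0 : ℝ) < q := by exact_mod_cast hq1
  set s := Real.sqrt ((q : ℝ) / (m * (1 + c ^ 2))) with hs
  have hs0 : 0 ≤ s := Real.sqrt_nonneg _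
  have hs2 : s ^ 2 = (q : ℝ) / (m * (1 + c ^ 2)) := Real.sq_sqrt (by positivity)
  set t := s * ((1 + c) * Δ) / m with ht
  have ht0 : 0 ≤ t := by positivity
  have ht2 : t ^ 2 = (q : ℝ) / m ^ 3 * ((1 + c) ^ 2 / (1 + c ^ 2)) * Δ ^ 2 := by
    rw [ht, div_pow, mul_pow, hs2]
    field_simp
  have ht1 : t ≤ 1 := by
    have h1 : (q : ℝ) / m ^ 3 * Δ ^ 2 ≤ 1 / 2 := by
      rw [le_div_iff₀ (by positivity)] at hq2
      rw [div_mul_eq_mul_div, div_le_iff₀ (by positivity)]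
      exact hq2
    have h2 : (1 + c) ^ 2 / (1 + c ^ 2) ≤ 2 := by
      rw [div_le_iff₀ (by positivity)]
      nlinarith [sq_nonneg (c - 1)]
    have h3 : t ^ 2 ≤ 1 := by
      rw [ht2]
      have h4 : 0 ≤ (q : ℝ) / m ^ 3 * Δ ^ 2 := by positivity
      nlinarith
    nlinarith
  have hsum : ∑ i : Fin m, 0.21 * (2 * t * |s * (c * μa i - μb i)| - t ^ 2) ≤
      ∑ i, (1 - 2 * gaussQ (s * (c * μa i - μb i))) * (s * (c * μa i - μb i)) :=
    Finset.sum_le_sum fun i _ => F_bound _ ht1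
  refine le_trans ?_ hsum
  have hT := sum_abs_bound μa μb Δ hopt c hc
  have hE : ∑ i : Fin m, 0.21 * (2 * t * |s * (c * μa i - μb i)| - t ^ 2) =
      0.21 * (2 * t * (s * ∑ i, |c * μa i - μb i|) - m * t ^ 2) := by
    simp only [abs_mul, abs_of_nonneg hs0]
    rw [← Finset.mul_sum, Finset.sum_sub_distrib, ← Finset.mul_sum, ← Finset.mul_sum]
    simp
  have hL : 0.21 * ((q : ℝ) / m ^ 2) * ((1 + c) ^ 2 / (1 + c ^ 2)) * Δ ^ 2 =
      0.21 * (m * t ^ 2) := by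
    rw [ht2]
    field_simp
  have hmt : s * ((1 + c) * Δ) = m * t := by
    rw [ht]
    field_simp
  rw [hE, hL]
  have h5 : m * t ≤ s * ∑ i, |c * μa i - μb i| := by
    rw [← hmt]
    exact mul_le_mul_of_nonneg_left hT hs0
  nlinarith [mul_le_mul_of_nonneg_left h5 ht0]
end
end

section
/- For every real z: if |z| > 1 then (1 − 2Q(z))·z ≥ 0.68·|z|, and if |z| ≤ 1 then (1 − 2Q(z))·z ≥ 0.48·z². -/
open Real

noncomputable section

lemma gq_integrable : MeasureTheory.Integrable (fun x : ℝ => Real.exp (-x ^ 2 / 2)) := by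
  have h := integrable_exp_neg_mul_sq (b := 1/2) (by norm_num)
  refine h.congr (Filter.Eventually.of_forall fun x => ?_)
  simp only
  congr 1
  ring

lemma gq_cont : Continuous (fun x : ℝ => Real.exp (-x ^ 2 / 2)) := by fun_prop

lemma gq_zero : ∫ x in Set.Ioi (0:ℝ), Real.exp (-x ^ 2 / 2) = √(2 * π) / 2 := by
  have h := integral_gaussian_Ioi (1/2)
  rw [show π / (1/2) = 2 * π by ring] at h
  rw [← h]
  congr 1
  ext x
  congr 1
  ring

lemma gq_eq (z : ℝ) :
    1 - 2 * gaussQ z = 2 / √(2 * π) * ∫ x in (0:ℝ)..z, Real.exp (-x ^ 2 / 2) := by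
  have h := intervalIntegral.integral_interval_add_Ioi (a := 0) (b := z)
    (f := fun x : ℝ => Real.exp (-x ^ 2 / 2)) gq_integrable.integrableOn gq_integrable.integrableOn
  rw [gq_zero] at h
  have hs : √(2 * π) ≠ 0 := by positivity
  have h2 : ∫ x in Set.Ioi z, Real.exp (-x ^ 2 / 2)
      = √(2 * π) / 2 - ∫ x in (0:ℝ)..z, Real.exp (-x ^ 2 / 2) := by linarith
  rw [gaussQ, h2]
  field_simp
  ring

lemma gq_const : 0.797 ≤ 2 / √(2 * π) := by
  have hs : 0 < √(2 * π) := by positivity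
  rw [le_div_iff₀ hs]
  have : √(2 * π) ≤ 2.509 := by
    rw [Real.sqrt_le_left (by norm_num)]
    have := Real.pi_lt_d4
    norm_num at *
    linarith
  norm_num at *
  linarith

lemma gq_small (z : ℝ) (h0 : 0 ≤ z) :
    z - z ^ 3 / 6 ≤ ∫ x in (0:ℝ)..z, Real.exp (-x ^ 2 / 2) := by
  have h : ∫ x in (0:ℝ)..z, (1 - x ^ 2 / 2) = z - z ^ 3 / 6 := by
    rw [intervalIntegral.integral_sub (by simp) (Continuous.intervalIntegrable (by fun_prop) _ _),
      intervalIntegral.integral_div, integral_pow]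
    simp
    ring
  rw [← h]
  apply intervalIntegral.integral_mono_on h0
    (Continuous.intervalIntegrable (by fun_prop) _ _) (gq_cont.intervalIntegrable _ _)
  intro x _
  have := Real.add_one_le_exp (-x ^ 2 / 2)
  linarith

lemma gq_one : 0.8545 ≤ ∫ x in (0:ℝ)..1, Real.exp (-x ^ 2 / 2) := by
  have h : ∫ x in (0:ℝ)..1, (1 - x ^ 2 / 2 + x ^ 4 / 8 - x ^ 6 / 48 - x ^ 8 * (5 / 1536))
      = 1 - 1/6 + 1/40 - 1/336 - 5/13824 := by
    have hd : ∀ x ∈ Set.uIcc (0:ℝ) 1, HasDerivAt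
        (fun x : ℝ => x - x ^ 3 / 6 + x ^ 5 / 40 - x ^ 7 / 336 - x ^ 9 * (5 / 13824))
        (1 - x ^ 2 / 2 + x ^ 4 / 8 - x ^ 6 / 48 - x ^ 8 * (5 / 1536)) x := by
      intro x _
      have := ((((hasDerivAt_id' x).sub ((hasDerivAt_pow 3 x).div_const 6)).add
        ((hasDerivAt_pow 5 x).div_const 40)).sub ((hasDerivAt_pow 7 x).div_const 336)).sub
        ((hasDerivAt_pow 9 x).mul_const (5 / 13824))
      refine HasDerivAt.congr_deriv this ?_
      push_cast
      ring
    rw [intervalIntegral.integral_eq_sub_of_hasDerivAt hd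
      (Continuous.intervalIntegrable (by fun_prop) _ _)]
    norm_num
  refine le_trans ?_ (intervalIntegral.integral_mono_on (μ := MeasureTheory.volume) (zero_le_one)
    (Continuous.intervalIntegrable (u := fun x : ℝ =>
      (1 - x ^ 2 / 2 + x ^ 4 / 8 - x ^ 6 / 48 - x ^ 8 * (5 / 1536))) (by fun_prop) _ _)
      (gq_cont.intervalIntegrable _ _) ?_)
  · rw [h]; norm_num
  · intro x hx
    have hx2 : x ^ 2 ≤ 1 := by nlinarith [hx.1, hx.2]
    have hb := Real.exp_bound (x := -x ^ 2 / 2) (n := 4)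
      (by rw [abs_le]; constructor <;> nlinarith [sq_nonneg x]) (by norm_num)
    have habs : |(-x ^ 2 / 2)| = x ^ 2 / 2 := by
      rw [neg_div, abs_neg, abs_of_nonneg (by positivity)]
    rw [habs] at hb
    have := (abs_le.1 hb).1
    simp [Finset.sum_range_succ, Nat.factorial] at this
    norm_num at this
    ring_nf at this ⊢
    linarith

lemma gq_odd (z : ℝ) : ∫ x in (0:ℝ)..(-z), Real.exp (-x ^ 2 / 2)
    = - ∫ x in (0:ℝ)..z, Real.exp (-x ^ 2 / 2) := by
  have := intervalIntegral.integral_comp_neg (a := 0) (b := z)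
    (fun x : ℝ => Real.exp (-x ^ 2 / 2))
  simp only [neg_sq, neg_zero] at this
  rw [this, intervalIntegral.integral_symm]

lemma gq_pos (z : ℝ) (hz : 0 ≤ z) :
    (1 < |z| → 0.68 * |z| ≤ (1 - 2 * gaussQ z) * z) ∧
    (|z| ≤ 1 → 0.48 * z ^ 2 ≤ (1 - 2 * gaussQ z) * z) := by
  rw [gq_eq, abs_of_nonneg hz]
  have hc := gq_const
  set c := 2 / √(2 * π)
  constructor
  · intro h
    apply mul_le_mul_of_nonneg_right _ hz
    have h1 : ∫ x in (0:ℝ)..1, Real.exp (-x ^ 2 / 2) ≤ ∫ x in (0:ℝ)..z, Real.exp (-x ^ 2 / 2) := by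
      rw [← intervalIntegral.integral_add_adjacent_intervals (gq_cont.intervalIntegrable 0 1)
        (gq_cont.intervalIntegrable 1 z)]
      have : 0 ≤ ∫ x in (1:ℝ)..z, Real.exp (-x ^ 2 / 2) :=
        intervalIntegral.integral_nonneg h.le fun x _ => (Real.exp_pos _).le
      linarith
    have h2 := gq_one.trans h1
    have h3 := mul_le_mul hc h2 (by norm_num) (le_trans (by norm_num) hc)
    refine le_trans ?_ h3
    norm_num
  · intro h
    rw [pow_two, ← mul_assoc]
    apply mul_le_mul_of_nonneg_right _ hz
    have h2 : 5 / 6 * z ≤ ∫ x in (0:ℝ)..z, Real.exp (-x ^ 2 / 2) := by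
      refine le_trans ?_ (gq_small z hz)
      have : z ^ 2 ≤ 1 := by nlinarith
      nlinarith
    have h3 := mul_le_mul hc h2 (by positivity) (le_trans (by norm_num) hc)
    refine le_trans ?_ h3
    norm_num at *
    linarith

/-- if `|z| > 1` then `(1 − 2Q(z)) z ≥ 0.68 |z|`, and if `|z| ≤ 1` then
`(1 − 2Q(z)) z ≥ 0.48 z²`. -/
theorem stmt7 (z : ℝ) :
    (1 < |z| → 0.68 * |z| ≤ (1 - 2 * gaussQ z) * z) ∧
    (|z| ≤ 1 → 0.48 * z ^ 2 ≤ (1 - 2 * gaussQ z) * z) := by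
  rcases le_total 0 z with h | h
  · exact gq_pos z h
  · have := gq_pos (-z) (by linarith)
    rw [abs_neg, gq_eq, gq_odd, neg_sq, mul_neg _ z, mul_neg, neg_mul, neg_neg, ← gq_eq] at this
    exact this
end
end
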